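/- arXiv:math-ph/0603071 — 8 statements merged into one kernel-verified Lean document; each statement's English description precedes it below -/
import Mathlib

section
/- Let c, β ∈ ℝ, let σ = (1/2)·[[i,0],[0,−i]], and let τ : ℝ → M_2(ℂ) be continuous with τ(x) skew-Hermitian and trace-free for every x. Let g : ℝ² → SU(2) be twice continuously differentiable, satisfying the generalized Maxwell–Bloch equation ∂_t((∂_t g)·g⁻¹) + c·∂_x((∂_t g)·g⁻¹) = [σ, g·τ(x)·g⁻¹], together with the constraint that the (1,1)-entry of (∂_t g)·g⁻¹ is identically equal to −iβ/2. Define E = −2·((∂_t g)·g⁻¹)₁₂, P = −i·(g·τ(x)·g⁻¹)₁₂ and D = −i·(g·τ(x)·g⁻¹)₁₁. Then D is real-valued and (E, P, D) satisfies: ∂_t E + c·∂_x E = 2P, ∂_t P = E·D − iβ·P, and ∂_t D = −(1/2)(conj(E)·P + E·conj(P)). -/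
/-!
Write `A = (∂_t g)·g⁻¹` and `M = g·τ·g⁻¹`. The `(1,2)`-entry of the equation is the first
Maxwell–Bloch equation, since `[σ, M]₁₂ = i·M₁₂ = -P`. The other two are the `(1,2)`- and
`(1,1)`-entries of the Lax equation `∂_t M = [A, M]`, in which `A` and `M` are in `su(2)` and
`A₁₁ = -iβ/2`.

The computation is carried out in coordinates: an element of `SU(2)` is `[[a, b], [-b̄, ā]]` with
`|a|² + |b|² = 1` (`SU2_entries`), and `τ = [[z, p], [-p̄, -z]]` with `z̄ = -z` (`su2_entries`).
Then `M₁₁` and `M₁₂` are polynomials in `a, b` and their conjugates (`conj_entries`), and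
`∂_t g = A·g` expresses `∂_t a` and `∂_t b` through `A₁₁` and `A₁₂` (`first_row_deriv`).
-/

open Matrix

/-- Partial derivative in `t` (entrywise) of a matrix-valued function of `(t, x)`. -/
noncomputable def mdt {n : ℕ} (M : ℝ → ℝ → Matrix (Fin n) (Fin n) ℂ) :
    ℝ → ℝ → Matrix (Fin n) (Fin n) ℂ :=
  fun t x => Matrix.of fun i j => deriv (fun s => M s x i j) t

/-- Partial derivative in `x` (entrywise) of a matrix-valued function of `(t, x)`. -/
noncomputable def mdx {n : ℕ} (M : ℝ → ℝ → Matrix (Fin n) (Fin n) ℂ) :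
    ℝ → ℝ → Matrix (Fin n) (Fin n) ℂ :=
  fun t x => Matrix.of fun i j => deriv (fun s => M t s i j) x

/-- σ = (1/2)·[[i, 0], [0, −i]]. -/
noncomputable def sigmaMat : Matrix (Fin 2) (Fin 2) ℂ :=
  (1/2 : ℂ) • !![Complex.I, 0; 0, -Complex.I]

/-- The field `E = −2·((∂_t g)·g⁻¹)₁₂`. -/
noncomputable def Efield (g : ℝ → ℝ → Matrix (Fin 2) (Fin 2) ℂ) : ℝ → ℝ → ℂ :=
  fun t x => -2 * ((mdt g t x * (g t x)⁻¹) 0 1)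

/-- The polarization `P = −i·(g·τ(x)·g⁻¹)₁₂`. -/
noncomputable def Pfield (g : ℝ → ℝ → Matrix (Fin 2) (Fin 2) ℂ)
    (τ : ℝ → Matrix (Fin 2) (Fin 2) ℂ) : ℝ → ℝ → ℂ :=
  fun t x => -Complex.I * ((g t x * τ x * (g t x)⁻¹) 0 1)

/-- The population inversion `D = −i·(g·τ(x)·g⁻¹)₁₁`. -/
noncomputable def Dfield (g : ℝ → ℝ → Matrix (Fin 2) (Fin 2) ℂ)
    (τ : ℝ → Matrix (Fin 2) (Fin 2) ℂ) : ℝ → ℝ → ℂ :=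
  fun t x => -Complex.I * ((g t x * τ x * (g t x)⁻¹) 0 0)

/-- The second row of an `SU(2)` matrix is determined by the first, and the first row is a unit
vector. -/
lemma SU2_entries (U : Matrix (Fin 2) (Fin 2) ℂ) (h : Uᴴ * U = 1) (hd : U.det = 1) :
    U 1 0 = -(starRingEnd ℂ) (U 0 1) ∧ U 1 1 = (starRingEnd ℂ) (U 0 0) ∧
    U 0 0 * (starRingEnd ℂ) (U 0 0) + U 0 1 * (starRingEnd ℂ) (U 0 1) = 1 := by
  -- The adjugate and the conjugate transpose are both the inverse of `U`.
  have hadj : Uᴴ = U.adjugate := by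
    have h2 : U * U.adjugate = 1 := by rw [Matrix.mul_adjugate, hd, one_smul]
    calc Uᴴ = Uᴴ * (U * U.adjugate) := by rw [h2, mul_one]
      _ = U.adjugate := by rw [← mul_assoc, h, one_mul]
  have h00 := congrFun (congrFun hadj 0) 0
  have h10 := congrFun (congrFun hadj 1) 0
  simp [Matrix.adjugate_fin_two, Matrix.conjTranspose_apply] at h00 h10
  refine ⟨by rw [h10, neg_neg], h00.symm, ?_⟩
  rw [Matrix.det_fin_two] at hd
  rw [h00, h10]
  linear_combination hd

lemma su2_entries (T : Matrix (Fin 2) (Fin 2) ℂ) (h : Tᴴ = -T) (ht : T.trace = 0) :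
    T 1 0 = -(starRingEnd ℂ) (T 0 1) ∧ T 1 1 = -T 0 0 ∧
    (starRingEnd ℂ) (T 0 0) = -T 0 0 := by
  have h00 := congrFun (congrFun h 0) 0
  have h10 := congrFun (congrFun h 1) 0
  simp [Matrix.conjTranspose_apply] at h00 h10
  rw [Matrix.trace_fin_two] at ht
  exact ⟨by rw [h10, neg_neg], by linear_combination ht, h00⟩

lemma SU2_inv (U : Matrix (Fin 2) (Fin 2) ℂ) (h : Uᴴ * U = 1) (hd : U.det = 1) :
    U⁻¹ = !![(starRingEnd ℂ) (U 0 0), -U 0 1; (starRingEnd ℂ) (U 0 1), U 0 0] := by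
  obtain ⟨h10, h11, -⟩ := SU2_entries U h hd
  rw [Matrix.inv_def, hd, Matrix.adjugate_fin_two, h10, h11]
  simp

/-- The first row of `U·T·U⁻¹` for `U ∈ SU(2)` and `T ∈ su(2)`, as polynomials in the first rows of
`U` and `T` and their conjugates. -/
lemma conj_entries (U T : Matrix (Fin 2) (Fin 2) ℂ) (h : Uᴴ * U = 1) (hd : U.det = 1)
    (hT : Tᴴ = -T) (ht : T.trace = 0) :
    (U * T * U⁻¹) 0 0 =
      (U 0 0 * (starRingEnd ℂ) (U 0 0) - U 0 1 * (starRingEnd ℂ) (U 0 1)) * T 0 0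
        + U 0 0 * (starRingEnd ℂ) (U 0 1) * T 0 1
        - (starRingEnd ℂ) (U 0 0) * U 0 1 * (starRingEnd ℂ) (T 0 1) ∧
    (U * T * U⁻¹) 0 1 =
      U 0 0 * U 0 0 * T 0 1 + U 0 1 * U 0 1 * (starRingEnd ℂ) (T 0 1)
        - 2 * (U 0 0 * U 0 1) * T 0 0 := by
  obtain ⟨t10, t11, -⟩ := su2_entries T hT ht
  rw [SU2_inv U h hd]
  simp only [Matrix.mul_apply, Fin.sum_univ_two, t10, t11]
  constructor <;> simp <;> ring

lemma sigma_commutator (M : Matrix (Fin 2) (Fin 2) ℂ) :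
    (sigmaMat * M - M * sigmaMat) 0 1 = Complex.I * M 0 1 := by
  rw [Matrix.sub_apply, Matrix.mul_apply, Matrix.mul_apply, Fin.sum_univ_two, Fin.sum_univ_two]
  simp [sigmaMat]
  ring

/-- The first row of `V = (V·U⁻¹)·U`, with the entries of the second row of `U` eliminated. -/
lemma first_row_deriv (U V : Matrix (Fin 2) (Fin 2) ℂ) (h : Uᴴ * U = 1) (hd : U.det = 1) :
    V 0 0 = (V * U⁻¹) 0 0 * U 0 0 - (V * U⁻¹) 0 1 * (starRingEnd ℂ) (U 0 1) ∧
    V 0 1 = (V * U⁻¹) 0 0 * U 0 1 + (V * U⁻¹) 0 1 * (starRingEnd ℂ) (U 0 0) := by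
  obtain ⟨-, -, hn⟩ := SU2_entries U h hd
  rw [SU2_inv U h hd]
  simp only [Matrix.mul_apply, Fin.sum_univ_two]
  constructor <;> simp
  · linear_combination (-V 0 0) * hn
  · linear_combination (-V 0 1) * hn

theorem MBN_on_SU2_gives_MaxwellBloch (c β : ℝ)
    (τ : ℝ → Matrix (Fin 2) (Fin 2) ℂ)
    (hτcont : ∀ i j, Continuous fun x => τ x i j)
    (hτskew : ∀ x, (τ x)ᴴ = -(τ x))
    (hτtr : ∀ x, (τ x).trace = 0)
    (g : ℝ → ℝ → Matrix (Fin 2) (Fin 2) ℂ)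
    (hg : ∀ i j, ContDiff ℝ 2 fun p : ℝ × ℝ => g p.1 p.2 i j)
    (hgSU : ∀ t x, (g t x)ᴴ * g t x = 1 ∧ (g t x).det = 1)
    (hMBN : ∀ t x, mdt (fun t x => mdt g t x * (g t x)⁻¹) t x
        + (c : ℂ) • mdx (fun t x => mdt g t x * (g t x)⁻¹) t x
      = sigmaMat * (g t x * τ x * (g t x)⁻¹) - (g t x * τ x * (g t x)⁻¹) * sigmaMat)
    (hconstraint : ∀ t x, (mdt g t x * (g t x)⁻¹) 0 0 = -Complex.I * (β : ℂ) / 2) :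
    (∀ t x, (Dfield g τ t x).im = 0) ∧
    (∀ t x, deriv (fun s => Efield g s x) t + (c : ℂ) * deriv (fun s => Efield g t s) x
        = 2 * Pfield g τ t x) ∧
    (∀ t x, deriv (fun s => Pfield g τ s x) t
        = Efield g t x * Dfield g τ t x - Complex.I * (β : ℂ) * Pfield g τ t x) ∧
    (∀ t x, deriv (fun s => Dfield g τ s x) t
        = -(1/2 : ℂ) * ((starRingEnd ℂ) (Efield g t x) * Pfield g τ t x
            + Efield g t x * (starRingEnd ℂ) (Pfield g τ t x))) := by
  have hderiv : ∀ i j t x, HasDerivAt (fun s => g s x i j) (mdt g t x i j) t := by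
    intro i j t x
    have h1 : Differentiable ℝ fun p : ℝ × ℝ => g p.1 p.2 i j := (hg i j).differentiable (by simp)
    have h2 : DifferentiableAt ℝ (fun s : ℝ => g s x i j) t :=
      (h1 (t, x)).comp t (f := fun s : ℝ => (s, x)) (by fun_prop)
    exact h2.hasDerivAt
  have hM := fun t x =>
    conj_entries (g t x) (τ x) (hgSU t x).1 (hgSU t x).2 (hτskew x) (hτtr x)
  refine ⟨fun t x => ?_, fun t x => ?_, fun t x => ?_, fun t x => ?_⟩
  · obtain ⟨-, -, t00⟩ := su2_entries (τ x) (hτskew x) (hτtr x)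
    rw [← Complex.conj_eq_iff_im, Dfield, (hM t x).1]
    simp [t00]
    ring
  · have h := congrFun (congrFun (hMBN t x) 0) 1
    simp only [Efield, Pfield, deriv_const_mul_field]
    rw [sigma_commutator] at h
    change deriv (fun s => (mdt g s x * (g s x)⁻¹) 0 1) t
      + (c : ℂ) * deriv (fun s => (mdt g t s * (g t s)⁻¹) 0 1) x = _ at h
    linear_combination (-2) * h
  · obtain ⟨ha, hb⟩ := first_row_deriv (g t x) (mdt g t x) (hgSU t x).1 (hgSU t x).2
    have da := hderiv 0 0 t x
    have db := hderiv 0 1 t x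
    have hc := hconstraint t x
    simp only [Efield, Pfield, Dfield, fun s => (hM s x).1, fun s => (hM s x).2]
    refine (HasDerivAt.deriv ((((da.mul da).mul_const (τ x 0 1)).add ((db.mul db).mul_const _)).sub
      (((da.mul db).const_mul 2).mul_const (τ x 0 0)) |>.const_mul (-Complex.I))).trans ?_
    rw [ha, hb, hc]
    ring
  · obtain ⟨ha, hb⟩ := first_row_deriv (g t x) (mdt g t x) (hgSU t x).1 (hgSU t x).2
    obtain ⟨-, -, t00⟩ := su2_entries (τ x) (hτskew x) (hτtr x)
    have da := hderiv 0 0 t x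
    have db := hderiv 0 1 t x
    have da' := da.star
    have db' := db.star
    have hc := hconstraint t x
    simp only [Efield, Pfield, Dfield, fun s => (hM s x).1, fun s => (hM s x).2]
    refine (HasDerivAt.deriv (((((da.mul da').sub (db.mul db')).mul_const (τ x 0 0)).add
      ((da.mul db').mul_const (τ x 0 1))).sub
      ((da'.mul db).mul_const ((starRingEnd ℂ) (τ x 0 1))) |>.const_mul (-Complex.I))).trans ?_
    rw [ha, hb, hc]
    have h2 : (starRingEnd ℂ) (2 : ℂ) = 2 := Complex.conj_ofNat 2
    simp [t00, h2]
    ring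
end

section
/- Let g : ℝ² → GL(n,ℂ) be a twice continuously differentiable solution of the generalized Maxwell–Bloch equation ∂_t((∂_t g)·g⁻¹) + c·∂_x((∂_t g)·g⁻¹) = [σ, g·τ(x)·g⁻¹]. Let a ∈ GL(n,ℂ) be a constant matrix with a·σ = σ·a, and let r : ℝ → GL(n,ℂ) be twice continuously differentiable with r(x)·τ(x) = τ(x)·r(x) for every x. Then f(t,x) = a·g(t,x)·r(x) is again a solution of the same generalized Maxwell–Bloch equation (with the same c, σ and τ). (This expresses the invariance of the equation under the left action of the centralizer of σ and the right action of the loop group of the torus centralizing τ.) -/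
/-!
The gauge factor `r` depends on `x` only, so it commutes with `∂_t` and cancels in `(∂_t f) f⁻¹`:
with `K = (∂_t g) g⁻¹` one has `(∂_t f) f⁻¹ = a K a⁻¹` (`mdt_two_sided_mul`). The entries of `K` are
`C¹` (`contDiff_current`), so both partial derivatives pass through the constant conjugation,
and the left-hand side for `f` is `a (·) a⁻¹` applied to the left-hand side for `g`. On the right,
`r` commutes with `τ` and cancels in `f τ f⁻¹`, while `a` commutes with `σ`, so the commutator is
conjugated by `a` as well.
-/

open Matrix

section Smoothness

variable {E : Type*} [NormedAddCommGroup E] [NormedSpace ℝ E] {n : ℕ} {k : WithTop ℕ∞}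

lemma contDiff_matrix_det {M : E → Matrix (Fin n) (Fin n) ℂ}
    (hM : ∀ i j, ContDiff ℝ k fun p => M p i j) : ContDiff ℝ k fun p => (M p).det := by
  simp only [Matrix.det_apply]
  exact ContDiff.sum fun s _ => (contDiff_prod fun i _ => hM _ _).const_smul _

/-- Smoothness of the entries of the inverse, by Cramer's rule. -/
lemma contDiff_matrix_inv {M : E → Matrix (Fin n) (Fin n) ℂ}
    (hM : ∀ i j, ContDiff ℝ k fun p => M p i j) (hu : ∀ p, IsUnit (M p)) (i j : Fin n) :
    ContDiff ℝ k fun p => (M p)⁻¹ i j := by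
  simp only [Matrix.inv_def, Ring.inverse_eq_inv', Matrix.smul_apply, Matrix.adjugate_apply,
    smul_eq_mul]
  refine ((contDiff_matrix_det hM).inv fun p => ?_).mul (contDiff_matrix_det fun i' j' => ?_)
  · exact ((Matrix.isUnit_iff_isUnit_det _).1 (hu p)).ne_zero
  · by_cases h : i' = j
    · subst h
      simpa using contDiff_const
    · simpa [Matrix.updateRow_ne h] using hM i' j'

lemma contDiff_matrix_mul {M N : E → Matrix (Fin n) (Fin n) ℂ}
    (hM : ∀ i j, ContDiff ℝ k fun p => M p i j) (hN : ∀ i j, ContDiff ℝ k fun p => N p i j)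
    (i j : Fin n) : ContDiff ℝ k fun p => (M p * N p) i j := by
  simp only [Matrix.mul_apply]
  exact ContDiff.sum fun l _ => (hM _ _).mul (hN _ _)

end Smoothness

lemma contDiff_mdt {n : ℕ} {g : ℝ → ℝ → Matrix (Fin n) (Fin n) ℂ}
    (hg : ∀ i j, ContDiff ℝ 2 fun p : ℝ × ℝ => g p.1 p.2 i j) (i j : Fin n) :
    ContDiff ℝ 1 fun p : ℝ × ℝ => mdt g p.1 p.2 i j := by
  -- The partial derivative is the total derivative evaluated on the vector `(1, 0)`.
  have h : (fun p : ℝ × ℝ => mdt g p.1 p.2 i j)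
      = fun p => fderiv ℝ (fun p : ℝ × ℝ => g p.1 p.2 i j) p (1, 0) := by
    funext p
    have h1 := ((hg i j).differentiable (by norm_num) p).hasFDerivAt
    have h2 : HasDerivAt (fun s : ℝ => (s, p.2)) ((1 : ℝ), (0 : ℝ)) p.1 :=
      (hasDerivAt_id p.1).prodMk (hasDerivAt_const p.1 p.2)
    exact (HasFDerivAt.comp_hasDerivAt p.1 h1 h2).deriv
  rw [h]
  exact ((hg i j).fderiv_right (by norm_num)).clm_apply contDiff_const

/-- The current `(∂_t g) g⁻¹` has `C¹` entries when `g` is `C²`. -/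
lemma contDiff_current {n : ℕ} {g : ℝ → ℝ → Matrix (Fin n) (Fin n) ℂ}
    (hg : ∀ i j, ContDiff ℝ 2 fun p : ℝ × ℝ => g p.1 p.2 i j)
    (hu : ∀ t x, IsUnit (g t x)) (i j : Fin n) :
    ContDiff ℝ 1 fun p : ℝ × ℝ => (mdt g p.1 p.2 * (g p.1 p.2)⁻¹) i j :=
  contDiff_matrix_mul (contDiff_mdt hg)
    (contDiff_matrix_inv (fun i j => (hg i j).of_le (by norm_num)) fun p => hu p.1 p.2) i j

/-- Entrywise differentiation commutes with constant left and right factors. -/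
lemma deriv_two_sided_mul {n : ℕ} {M : ℝ → Matrix (Fin n) (Fin n) ℂ} {t : ℝ}
    (hM : ∀ i j, DifferentiableAt ℝ (fun s => M s i j) t) (a b : Matrix (Fin n) (Fin n) ℂ) :
    (Matrix.of fun i j => deriv (fun s => (a * M s * b) i j) t)
      = a * (Matrix.of fun i j => deriv (fun s => M s i j) t) * b := by
  ext i j
  simp only [Matrix.of_apply, Matrix.mul_apply]
  exact (HasDerivAt.fun_sum fun l _ => (HasDerivAt.fun_sum fun m _ =>
    ((hM m l).hasDerivAt.const_mul (a i m))).mul_const (b l j)).deriv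

lemma mdt_two_sided_mul {n : ℕ} {M : ℝ → ℝ → Matrix (Fin n) (Fin n) ℂ}
    (hM : ∀ i j, ContDiff ℝ 1 fun p : ℝ × ℝ => M p.1 p.2 i j)
    (a : Matrix (Fin n) (Fin n) ℂ) (r : ℝ → Matrix (Fin n) (Fin n) ℂ) (t x : ℝ) :
    mdt (fun t x => a * M t x * r x) t x = a * mdt M t x * r x :=
  deriv_two_sided_mul (M := fun s => M s x) (fun i j =>
    ((hM i j).comp (contDiff_prodMk_left x)).differentiable (by norm_num) t) a (r x)

lemma mdx_two_sided_mul {n : ℕ} {M : ℝ → ℝ → Matrix (Fin n) (Fin n) ℂ}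
    (hM : ∀ i j, ContDiff ℝ 1 fun p : ℝ × ℝ => M p.1 p.2 i j)
    (a b : Matrix (Fin n) (Fin n) ℂ) (t x : ℝ) :
    mdx (fun t x => a * M t x * b) t x = a * mdx M t x * b :=
  deriv_two_sided_mul (M := fun s => M t s) (fun i j =>
    ((hM i j).comp (contDiff_prodMk_right t)).differentiable (by norm_num) x) a b

theorem MBN_symmetry_centralizers {n : ℕ} (c : ℝ)
    (σ : Matrix (Fin n) (Fin n) ℂ)
    (τ : ℝ → Matrix (Fin n) (Fin n) ℂ)
    (g : ℝ → ℝ → Matrix (Fin n) (Fin n) ℂ)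
    (hg : ∀ i j, ContDiff ℝ 2 fun p : ℝ × ℝ => g p.1 p.2 i j)
    (hginv : ∀ t x, IsUnit (g t x))
    (hMBN : ∀ t x, mdt (fun t x => mdt g t x * (g t x)⁻¹) t x
        + (c : ℂ) • mdx (fun t x => mdt g t x * (g t x)⁻¹) t x
      = σ * (g t x * τ x * (g t x)⁻¹) - (g t x * τ x * (g t x)⁻¹) * σ)
    (a : Matrix (Fin n) (Fin n) ℂ) (hainv : IsUnit a) (haσ : a * σ = σ * a)
    (r : ℝ → Matrix (Fin n) (Fin n) ℂ)
    (hr : ∀ i j, ContDiff ℝ 2 fun x => r x i j)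
    (hrinv : ∀ x, IsUnit (r x))
    (hrτ : ∀ x, r x * τ x = τ x * r x)
    (f : ℝ → ℝ → Matrix (Fin n) (Fin n) ℂ)
    (hf : ∀ t x, f t x = a * g t x * r x) :
    ∀ t x, mdt (fun t x => mdt f t x * (f t x)⁻¹) t x
        + (c : ℂ) • mdx (fun t x => mdt f t x * (f t x)⁻¹) t x
      = σ * (f t x * τ x * (f t x)⁻¹) - (f t x * τ x * (f t x)⁻¹) * σ := by
  obtain rfl : f = fun t x => a * g t x * r x := by
    funext t x
    exact hf t x
  have hg1 : ∀ i j, ContDiff ℝ 1 fun p : ℝ × ℝ => g p.1 p.2 i j :=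
    fun i j => (hg i j).of_le (by norm_num)
  have haa : a⁻¹ * a = 1 := Matrix.nonsing_inv_mul a ((Matrix.isUnit_iff_isUnit_det a).1 hainv)
  have haa' : a * a⁻¹ = 1 := Matrix.mul_nonsing_inv a ((Matrix.isUnit_iff_isUnit_det a).1 hainv)
  have hrr : ∀ x, r x * (r x)⁻¹ = 1 := fun x =>
    Matrix.mul_nonsing_inv _ ((Matrix.isUnit_iff_isUnit_det _).1 (hrinv x))
  -- A right factor `r` cancels against the inverse of `a g r`.
  have hcancel : ∀ (t x : ℝ) (N : Matrix (Fin n) (Fin n) ℂ),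
      a * N * r x * (a * g t x * r x)⁻¹ = a * (N * (g t x)⁻¹) * a⁻¹ := by
    intro t x N
    rw [Matrix.mul_inv_rev, Matrix.mul_inv_rev]
    calc a * N * r x * ((r x)⁻¹ * ((g t x)⁻¹ * a⁻¹))
        = a * N * (r x * (r x)⁻¹) * ((g t x)⁻¹ * a⁻¹) := by simp only [Matrix.mul_assoc]
      _ = a * (N * (g t x)⁻¹) * a⁻¹ := by rw [hrr, Matrix.mul_one]; simp only [Matrix.mul_assoc]
  have hcur : (fun t x => mdt (fun t x => a * g t x * r x) t x * (a * g t x * r x)⁻¹)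
      = fun t x => a * (mdt g t x * (g t x)⁻¹) * a⁻¹ := by
    funext t x
    rw [mdt_two_sided_mul hg1, hcancel]
  have hK := contDiff_current hg hginv
  intro t x
  have hdt := mdt_two_sided_mul (M := fun t x => mdt g t x * (g t x)⁻¹) hK a (fun _ => a⁻¹) t x
  have hdx := mdx_two_sided_mul (M := fun t x => mdt g t x * (g t x)⁻¹) hK a a⁻¹ t x
  have hτ : a * g t x * r x * τ x * (a * g t x * r x)⁻¹
      = a * (g t x * τ x * (g t x)⁻¹) * a⁻¹ := by
    rw [← hcancel t x (g t x * τ x), Matrix.mul_assoc (a * g t x), hrτ]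
    simp only [Matrix.mul_assoc]
  have hσ : a⁻¹ * σ = σ * a⁻¹ := by
    calc a⁻¹ * σ = a⁻¹ * (σ * a) * a⁻¹ := by
          rw [Matrix.mul_assoc, Matrix.mul_assoc, haa', Matrix.mul_one]
      _ = σ * a⁻¹ := by rw [← haσ, ← Matrix.mul_assoc, haa, Matrix.one_mul]
  simp only [hcur, hdt, hdx, hτ]
  generalize hS : g t x * τ x * (g t x)⁻¹ = S
  have h := congrArg (fun X => a * X * a⁻¹) (hMBN t x)
  simp only [hS, Matrix.mul_add, Matrix.add_mul, Matrix.mul_sub, Matrix.sub_mul,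
    Matrix.mul_smul, Matrix.smul_mul] at h
  rw [h]
  congr 1
  · simp only [← Matrix.mul_assoc, haσ]
  · simp only [Matrix.mul_assoc, hσ]
end

section
/- Let φ : ℝ² → ℝ be twice continuously differentiable, let c ∈ ℝ, and define g(t,x) = [[cos φ(t,x), sin φ(t,x)], [−sin φ(t,x), cos φ(t,x)]] with values in U(1) ⊂ SU(2). Let σ = (1/2)·[[i,0],[0,−i]] and τ(x) ≡ σ. Then g satisfies the generalized Maxwell–Bloch equation ∂_t((∂_t g)·g⁻¹) + c·∂_x((∂_t g)·g⁻¹) = [σ, g·σ·g⁻¹] if and only if φ satisfies φ_tt + c·φ_tx = (1/2)·sin(2φ); equivalently, ψ = 2φ satisfies the sine-Gordon-type equation ψ_tt + c·ψ_tx = sin ψ. -/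
/-!
With `J = !![0, 1; -1, 0]` the matrix `g` is `exp (φ J)`, so `g_t g⁻¹ = φ_t J`, and the left-hand
side of the Maxwell–Bloch equation is `(φ_tt + c φ_xt) J`. A direct computation gives
`[σ, g σ g⁻¹] = (1/2) sin (2φ) J`. Comparing the coefficients of `J`, and exchanging the order of
the mixed partial derivatives (`deriv_deriv_comm`, where `C²` is needed), yields the first
equivalence. The second one is multiplication by `2`.
-/

open Matrix

/-- The rotation matrix `g(t,x) = [[cos φ, sin φ], [−sin φ, cos φ]]` viewed in `SU(2)`. -/
noncomputable def rotMat (φ : ℝ → ℝ → ℝ) : ℝ → ℝ → Matrix (Fin 2) (Fin 2) ℂ :=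
  fun t x => !![(Real.cos (φ t x) : ℂ), (Real.sin (φ t x) : ℂ);
               -(Real.sin (φ t x) : ℂ), (Real.cos (φ t x) : ℂ)]

/-- ∂_t∂_t φ. -/
noncomputable def phitt (φ : ℝ → ℝ → ℝ) : ℝ → ℝ → ℝ :=
  fun t x => deriv (fun s => deriv (fun r => φ r x) s) t

/-- ∂_t∂_x φ. -/
noncomputable def phitx (φ : ℝ → ℝ → ℝ) : ℝ → ℝ → ℝ :=
  fun t x => deriv (fun s => deriv (fun r => φ s r) x) t

lemma hasDerivAt_mk_left (t x : ℝ) : HasDerivAt (fun s : ℝ => (s, x)) ((1 : ℝ), (0 : ℝ)) t :=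
  (hasDerivAt_id t).prodMk (hasDerivAt_const t x)

lemma hasDerivAt_mk_right (t x : ℝ) : HasDerivAt (fun s : ℝ => (t, s)) ((0 : ℝ), (1 : ℝ)) x :=
  (hasDerivAt_const x t).prodMk (hasDerivAt_id x)

lemma hasDerivAt_t {φ : ℝ → ℝ → ℝ} (hφ : ContDiff ℝ 2 fun p : ℝ × ℝ => φ p.1 p.2)
    (t x : ℝ) :
    HasDerivAt (fun s => φ s x) (fderiv ℝ (fun p : ℝ × ℝ => φ p.1 p.2) (t, x) (1, 0)) t :=
  HasFDerivAt.comp_hasDerivAt (l := fun p : ℝ × ℝ => φ p.1 p.2) t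
    (hφ.differentiable (by norm_num) (t, x)).hasFDerivAt (hasDerivAt_mk_left t x)

lemma hasDerivAt_x {φ : ℝ → ℝ → ℝ} (hφ : ContDiff ℝ 2 fun p : ℝ × ℝ => φ p.1 p.2)
    (t x : ℝ) :
    HasDerivAt (fun s => φ t s) (fderiv ℝ (fun p : ℝ × ℝ => φ p.1 p.2) (t, x) (0, 1)) x :=
  HasFDerivAt.comp_hasDerivAt (l := fun p : ℝ × ℝ => φ p.1 p.2) x
    (hφ.differentiable (by norm_num) (t, x)).hasFDerivAt (hasDerivAt_mk_right t x)

lemma hasFDerivAt_fderiv {φ : ℝ → ℝ → ℝ} (hφ : ContDiff ℝ 2 fun p : ℝ × ℝ => φ p.1 p.2)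
    (p : ℝ × ℝ) :
    HasFDerivAt (fderiv ℝ (fun p : ℝ × ℝ => φ p.1 p.2))
      (fderiv ℝ (fderiv ℝ (fun p : ℝ × ℝ => φ p.1 p.2)) p) p :=
  ((hφ.fderiv_right (m := 1) (by norm_num)).differentiable (by norm_num) p).hasFDerivAt

lemma hasDerivAt_tt {φ : ℝ → ℝ → ℝ} (hφ : ContDiff ℝ 2 fun p : ℝ × ℝ => φ p.1 p.2)
    (t x : ℝ) :
    HasDerivAt (fun s => deriv (fun r => φ r x) s)
      (fderiv ℝ (fderiv ℝ (fun p : ℝ × ℝ => φ p.1 p.2)) (t, x) (1, 0) (1, 0)) t := by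
  simp_rw [fun s => (hasDerivAt_t hφ s x).deriv]
  have h := (hasFDerivAt_fderiv hφ (t, x)).comp_hasDerivAt t (hasDerivAt_mk_left t x)
  simpa using h.clm_apply (hasDerivAt_const t ((1 : ℝ), (0 : ℝ)))

lemma hasDerivAt_xt {φ : ℝ → ℝ → ℝ} (hφ : ContDiff ℝ 2 fun p : ℝ × ℝ => φ p.1 p.2)
    (t x : ℝ) :
    HasDerivAt (fun s => deriv (fun r => φ r s) t)
      (fderiv ℝ (fderiv ℝ (fun p : ℝ × ℝ => φ p.1 p.2)) (t, x) (0, 1) (1, 0)) x := by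
  simp_rw [fun s => (hasDerivAt_t hφ t s).deriv]
  have h := (hasFDerivAt_fderiv hφ (t, x)).comp_hasDerivAt x (hasDerivAt_mk_right t x)
  simpa using h.clm_apply (hasDerivAt_const x ((1 : ℝ), (0 : ℝ)))

lemma hasDerivAt_tx {φ : ℝ → ℝ → ℝ} (hφ : ContDiff ℝ 2 fun p : ℝ × ℝ => φ p.1 p.2)
    (t x : ℝ) :
    HasDerivAt (fun s => deriv (fun r => φ s r) x)
      (fderiv ℝ (fderiv ℝ (fun p : ℝ × ℝ => φ p.1 p.2)) (t, x) (1, 0) (0, 1)) t := by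
  simp_rw [fun s => (hasDerivAt_x hφ s x).deriv]
  have h := (hasFDerivAt_fderiv hφ (t, x)).comp_hasDerivAt t (hasDerivAt_mk_left t x)
  simpa using h.clm_apply (hasDerivAt_const t ((0 : ℝ), (1 : ℝ)))

lemma deriv_deriv_comm {φ : ℝ → ℝ → ℝ} (hφ : ContDiff ℝ 2 fun p : ℝ × ℝ => φ p.1 p.2)
    (t x : ℝ) :
    deriv (fun s => deriv (fun r => φ r s) t) x = phitx φ t x := by
  rw [phitx, (hasDerivAt_xt hφ t x).deriv, (hasDerivAt_tx hφ t x).deriv]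
  exact (hφ.contDiffAt.isSymmSndFDerivAt (by simp)) _ _

lemma rotMat_inv (φ : ℝ → ℝ → ℝ) (t x : ℝ) :
    (rotMat φ t x)⁻¹ = !![(Real.cos (φ t x) : ℂ), -(Real.sin (φ t x) : ℂ);
      (Real.sin (φ t x) : ℂ), (Real.cos (φ t x) : ℂ)] := by
  have h : (Real.cos (φ t x) : ℂ) ^ 2 + (Real.sin (φ t x) : ℂ) ^ 2 = 1 := by
    exact_mod_cast Real.cos_sq_add_sin_sq (φ t x)
  apply Matrix.inv_eq_right_inv
  rw [rotMat, Matrix.mul_fin_two, Matrix.one_fin_two]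
  ext i j
  fin_cases i <;> fin_cases j <;> dsimp
  · linear_combination h
  · ring
  · ring
  · linear_combination h

/-- The identity `g_t g⁻¹ = φ_t J`. -/
lemma mdt_rotMat_mul_inv {φ : ℝ → ℝ → ℝ} (hφ : ContDiff ℝ 2 fun p : ℝ × ℝ => φ p.1 p.2)
    (t x : ℝ) :
    mdt (rotMat φ) t x * (rotMat φ t x)⁻¹ =
      !![0, ((deriv (fun r => φ r x) t : ℝ) : ℂ); -((deriv (fun r => φ r x) t : ℝ) : ℂ), 0] := by
  have hd : HasDerivAt (fun s => φ s x) (deriv (fun r => φ r x) t) t :=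
    (hasDerivAt_t hφ t x).differentiableAt.hasDerivAt
  have hs := hd.sin.ofReal_comp
  have hc := hd.cos.ofReal_comp
  have h : (Real.cos (φ t x) : ℂ) ^ 2 + (Real.sin (φ t x) : ℂ) ^ 2 = 1 := by
    exact_mod_cast Real.cos_sq_add_sin_sq (φ t x)
  generalize deriv (fun r => φ r x) t = d at *
  have hm : mdt (rotMat φ) t x =
      !![((-Real.sin (φ t x) * d : ℝ) : ℂ), ((Real.cos (φ t x) * d : ℝ) : ℂ);
        -((Real.cos (φ t x) * d : ℝ) : ℂ), ((-Real.sin (φ t x) * d : ℝ) : ℂ)] := by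
    ext i j
    fin_cases i <;> fin_cases j
    exacts [hc.deriv, hs.deriv, hs.neg.deriv, hc.deriv]
  rw [rotMat_inv, hm, Matrix.mul_fin_two]
  push_cast at h ⊢
  ext i j
  fin_cases i <;> fin_cases j <;> dsimp
  · ring
  · linear_combination (d : ℂ) * h
  · linear_combination -(d : ℂ) * h
  · ring

/-- The identity `[σ, g σ g⁻¹] = (1/2) sin (2φ) J`. -/
lemma commutator_eq (φ : ℝ → ℝ → ℝ) (t x : ℝ) :
    sigmaMat * (rotMat φ t x * sigmaMat * (rotMat φ t x)⁻¹)
        - (rotMat φ t x * sigmaMat * (rotMat φ t x)⁻¹) * sigmaMat =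
      !![0, (((1/2) * Real.sin (2 * φ t x) : ℝ) : ℂ);
        -(((1/2) * Real.sin (2 * φ t x) : ℝ) : ℂ), 0] := by
  rw [rotMat_inv, rotMat, sigmaMat, Real.sin_two_mul]
  push_cast
  ext i j
  fin_cases i <;> fin_cases j <;> simp
  · ring
  · linear_combination (-Complex.sin (φ t x) * Complex.cos (φ t x)) * Complex.I_sq
  · linear_combination (Complex.sin (φ t x) * Complex.cos (φ t x)) * Complex.I_sq
  · ring

/-- The left-hand side of the Maxwell–Bloch equation is `(φ_tt + c φ_tx) J`. -/
lemma lhs_eq (c : ℝ) {φ : ℝ → ℝ → ℝ} (hφ : ContDiff ℝ 2 fun p : ℝ × ℝ => φ p.1 p.2) (t x : ℝ) :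
    mdt (fun t x => mdt (rotMat φ) t x * (rotMat φ t x)⁻¹) t x
        + (c : ℂ) • mdx (fun t x => mdt (rotMat φ) t x * (rotMat φ t x)⁻¹) t x =
      !![0, ((phitt φ t x + c * phitx φ t x : ℝ) : ℂ);
        -((phitt φ t x + c * phitx φ t x : ℝ) : ℂ), 0] := by
  have ht := (hasDerivAt_tt hφ t x).differentiableAt.hasDerivAt.ofReal_comp
  have hx := (hasDerivAt_xt hφ t x).differentiableAt.hasDerivAt.ofReal_comp
  rw [deriv_deriv_comm hφ] at hx
  change HasDerivAt _ ((phitt φ t x : ℝ) : ℂ) t at ht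
  simp_rw [mdt_rotMat_mul_inv hφ]
  ext i j
  fin_cases i <;> fin_cases j <;> simp [mdt, mdx, ht.deriv, hx.deriv]
  ring

theorem MBN_reduces_to_sineGordon (c : ℝ) (φ : ℝ → ℝ → ℝ)
    (hφ : ContDiff ℝ 2 fun p : ℝ × ℝ => φ p.1 p.2) :
    ((∀ t x, mdt (fun t x => mdt (rotMat φ) t x * (rotMat φ t x)⁻¹) t x
        + (c : ℂ) • mdx (fun t x => mdt (rotMat φ) t x * (rotMat φ t x)⁻¹) t x
      = sigmaMat * (rotMat φ t x * sigmaMat * (rotMat φ t x)⁻¹)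
        - (rotMat φ t x * sigmaMat * (rotMat φ t x)⁻¹) * sigmaMat)
    ↔
    (∀ t x, phitt φ t x + c * phitx φ t x = (1/2) * Real.sin (2 * φ t x)))
    ∧
    ((∀ t x, phitt φ t x + c * phitx φ t x = (1/2) * Real.sin (2 * φ t x))
    ↔
    (∀ t x, phitt (fun t x => 2 * φ t x) t x + c * phitx (fun t x => 2 * φ t x) t x
        = Real.sin (2 * φ t x))) := by
  constructor
  · refine forall_congr' fun t => forall_congr' fun x => ?_
    rw [lhs_eq c hφ, commutator_eq]
    constructor
    · intro h
      have h01 := congrFun (congrFun h 0) 1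
      exact Complex.ofReal_injective h01
    · intro h
      rw [h]
  · refine forall_congr' fun t => forall_congr' fun x => ?_
    have h1 : phitt (fun t x => 2 * φ t x) t x = 2 * phitt φ t x := by
      simp only [phitt, deriv_const_mul_field]
    have h2 : phitx (fun t x => 2 * φ t x) t x = 2 * phitx φ t x := by
      simp only [phitx, deriv_const_mul_field]
    rw [h1, h2]
    constructor <;> intro h <;> linarith
end

section
/- Let σ, τ ∈ M_n(ℂ) be constant matrices and let g : ℝ → GL(n,ℂ) be twice continuously differentiable, satisfying the generalized C. Neumann equation ∂_t((∂_t g)·g⁻¹) = [σ, g·τ·g⁻¹]. Then the energy t ↦ (1/2)·Tr(((∂_t g)·g⁻¹)²) + Tr(σ·g·τ·g⁻¹) is constant in t. -/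
/-!
Put `L = g' g⁻¹` and `A = g τ g⁻¹`. Then `A' = [L, A]` and the equation of motion reads
`L' = [σ, A]`, so the derivative of the energy `(1/2) Tr(L²) + Tr(σ A)` is
`Tr(L [σ, A]) + Tr(σ [L, A])`, which vanishes by cyclicity of the trace (invariance of the
trace form). The analytic input is that the entrywise derivative `mder` is the Fréchet derivative
for the `ℓ^∞` operator norm, under which square matrices form a complete normed algebra, so that
the general formula for the derivative of the inverse applies.
-/

open Matrix

/-- Derivative (entrywise) of a matrix-valued function of one real variable. -/
noncomputable def mder {n : ℕ} (M : ℝ → Matrix (Fin n) (Fin n) ℂ) :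
    ℝ → Matrix (Fin n) (Fin n) ℂ :=
  fun t => Matrix.of fun i j => deriv (fun s => M s i j) t

section Calculus

attribute [local instance] Matrix.linftyOpNormedRing Matrix.linftyOpNormedAlgebra

/-- The `ℓ^∞` operator norm induces the product topology, so differentiability is entrywise. -/
lemma hasDerivAt_matrix_iff {n : ℕ} {M : ℝ → Matrix (Fin n) (Fin n) ℂ}
    {M' : Matrix (Fin n) (Fin n) ℂ} {t : ℝ} :
    HasDerivAt M M' t ↔ ∀ i j, HasDerivAt (fun s => M s i j) (M' i j) t := by
  have h : @HasDerivAt ℝ _ (Fin n → Fin n → ℂ) _ _ _ _ M M' t ↔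
      ∀ i j, HasDerivAt (fun s => M s i j) (M' i j) t :=
    hasDerivAt_pi.trans (forall_congr' fun i => hasDerivAt_pi)
  exact h

lemma HasDerivAt.matrix_mul {n : ℕ} {M N : ℝ → Matrix (Fin n) (Fin n) ℂ}
    {M' N' : Matrix (Fin n) (Fin n) ℂ} {t : ℝ} (hM : HasDerivAt M M' t) (hN : HasDerivAt N N' t) :
    HasDerivAt (fun s => M s * N s) (M' * N t + M t * N') t := by
  rw [hasDerivAt_matrix_iff] at *
  intro i j
  simp only [Matrix.add_apply, Matrix.mul_apply, ← Finset.sum_add_distrib]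
  exact HasDerivAt.fun_sum fun k _ => (hM i k).mul (hN k j)

lemma hasDerivAt_mder {n : ℕ} {M : ℝ → Matrix (Fin n) (Fin n) ℂ} {t : ℝ}
    (h : ∀ i j, DifferentiableAt ℝ (fun s => M s i j) t) : HasDerivAt M (mder M t) t :=
  hasDerivAt_matrix_iff.2 fun i j => (h i j).hasDerivAt

lemma HasDerivAt.matrix_inv {n : ℕ} {M : ℝ → Matrix (Fin n) (Fin n) ℂ}
    {M' : Matrix (Fin n) (Fin n) ℂ} {t : ℝ} (h : HasDerivAt M M' t) (hu : IsUnit (M t)) :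
    HasDerivAt (fun s => (M s)⁻¹) (-((M t)⁻¹ * M' * (M t)⁻¹)) t := by
  obtain ⟨u, hu⟩ := hu
  have h2 : HasFDerivAt Ring.inverse
      (-ContinuousLinearMap.mulLeftRight ℝ (Matrix (Fin n) (Fin n) ℂ) ↑u⁻¹ ↑u⁻¹) (M t) :=
    hu ▸ hasFDerivAt_ringInverse (𝕜 := ℝ) u
  have h3 := h2.comp_hasDerivAt t h
  have e : (M t)⁻¹ = ↑u⁻¹ := by rw [← hu, Matrix.coe_units_inv]
  simp only [Matrix.nonsing_inv_eq_ringInverse] at e ⊢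
  rw [e]
  have h4 : (-ContinuousLinearMap.mulLeftRight ℝ (Matrix (Fin n) (Fin n) ℂ) ↑u⁻¹ ↑u⁻¹) M'
      = -((u⁻¹ : (Matrix (Fin n) (Fin n) ℂ)ˣ) * M' * (u⁻¹ : (Matrix (Fin n) (Fin n) ℂ)ˣ)) := rfl
  rw [← h4]
  exact h3

lemma HasDerivAt.matrix_trace {n : ℕ} {M : ℝ → Matrix (Fin n) (Fin n) ℂ}
    {M' : Matrix (Fin n) (Fin n) ℂ} {t : ℝ} (h : HasDerivAt M M' t) :
    HasDerivAt (fun s => (M s).trace) M'.trace t := by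
  simp only [Matrix.trace, Matrix.diag]
  exact HasDerivAt.fun_sum fun i _ => hasDerivAt_matrix_iff.1 h i i

/-- Infinitesimal conservation law: the energy has derivative zero at every time. -/
lemma hasDerivAt_energy {n : ℕ}
    (σ τ : Matrix (Fin n) (Fin n) ℂ)
    (g : ℝ → Matrix (Fin n) (Fin n) ℂ)
    (hg : ∀ i j, ContDiff ℝ 2 fun t => g t i j)
    (hginv : ∀ t, IsUnit (g t))
    (hODE : ∀ t, mder (fun t => mder g t * (g t)⁻¹) t
      = σ * (g t * τ * (g t)⁻¹) - (g t * τ * (g t)⁻¹) * σ) (t : ℝ) :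
    HasDerivAt (fun t => (1/2 : ℂ) * ((mder g t * (g t)⁻¹) * (mder g t * (g t)⁻¹)).trace
          + (σ * g t * τ * (g t)⁻¹).trace) 0 t := by
  have hg1 : HasDerivAt g (mder g t) t :=
    hasDerivAt_mder fun i j => (hg i j).differentiable (by norm_num) t
  have hg2 : HasDerivAt (mder g) (mder (mder g) t) t := by
    refine hasDerivAt_mder fun i j => ?_
    have h : ContDiff ℝ (1 + 1) fun t => g t i j := by simpa [one_add_one_eq_two] using hg i j
    exact (contDiff_succ_iff_deriv.1 h).2.2.differentiable (by norm_num) t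
  have hi := hg1.matrix_inv (hginv t)
  have hL : HasDerivAt (fun t => mder g t * (g t)⁻¹)
      (σ * (g t * τ * (g t)⁻¹) - (g t * τ * (g t)⁻¹) * σ) t := by
    rw [← hODE t]
    exact hasDerivAt_mder fun i j => (hasDerivAt_matrix_iff.1 (hg2.matrix_mul hi) i j).differentiableAt
  have hA := (((hasDerivAt_const t σ).matrix_mul hg1).matrix_mul
    (hasDerivAt_const t τ)).matrix_mul hi
  simp only [zero_mul, zero_add, mul_zero, add_zero] at hA
  have hE := ((hL.matrix_mul hL).matrix_trace.const_mul (1/2 : ℂ)).add hA.matrix_trace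
  refine hE.congr_deriv ?_
  set L := mder g t * (g t)⁻¹ with hLdef
  set A := g t * τ * (g t)⁻¹ with hAdef
  have hunit : (g t)⁻¹ * g t = 1 :=
    Matrix.nonsing_inv_mul _ ((Matrix.isUnit_iff_isUnit_det _).1 (hginv t))
  have e : σ * mder g t * τ * (g t)⁻¹ + σ * g t * τ * -((g t)⁻¹ * mder g t * (g t)⁻¹)
      = σ * (L * A - A * L) := by
    have h1 : L * A = mder g t * τ * (g t)⁻¹ := by
      calc L * A = mder g t * ((g t)⁻¹ * g t) * τ * (g t)⁻¹ := by
            simp only [hLdef, hAdef, mul_assoc]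
        _ = _ := by rw [hunit, mul_one]
    rw [mul_sub, h1, hAdef, hLdef, mul_neg, ← sub_eq_add_neg]
    simp only [mul_assoc]
  rw [e]
  simp only [mul_sub, sub_mul, Matrix.trace_add, Matrix.trace_sub]
  have c1 : (L * (σ * A)).trace = (σ * A * L).trace := Matrix.trace_mul_comm _ _
  have c2 : (A * σ * L).trace = (L * (A * σ)).trace := Matrix.trace_mul_comm _ _
  have c3 : (L * (A * σ)).trace = (σ * (L * A)).trace := by
    rw [← mul_assoc, Matrix.trace_mul_comm]
  rw [c1, c2, c3, ← mul_assoc σ A L]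
  ring

end Calculus

theorem neumann_energy_conservation {n : ℕ}
    (σ τ : Matrix (Fin n) (Fin n) ℂ)
    (g : ℝ → Matrix (Fin n) (Fin n) ℂ)
    (hg : ∀ i j, ContDiff ℝ 2 fun t => g t i j)
    (hginv : ∀ t, IsUnit (g t))
    (hODE : ∀ t, mder (fun t => mder g t * (g t)⁻¹) t
      = σ * (g t * τ * (g t)⁻¹) - (g t * τ * (g t)⁻¹) * σ) :
    ∀ t₁ t₂ : ℝ,
      (1/2 : ℂ) * ((mder g t₁ * (g t₁)⁻¹) * (mder g t₁ * (g t₁)⁻¹)).trace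
          + (σ * g t₁ * τ * (g t₁)⁻¹).trace
      = (1/2 : ℂ) * ((mder g t₂ * (g t₂)⁻¹) * (mder g t₂ * (g t₂)⁻¹)).trace
          + (σ * g t₂ * τ * (g t₂)⁻¹).trace := by
  have h := hasDerivAt_energy σ τ g hg hginv hODE
  exact fun t₁ t₂ => is_const_of_deriv_eq_zero (fun t => (h t).differentiableAt)
    (fun t => (h t).deriv) t₁ t₂
end

section
/- Let c ∈ ℝ, let σ ∈ M_n(ℂ) be constant, let τ : ℝ → M_n(ℂ) be continuous and 2π-periodic, and let g : ℝ² → GL(n,ℂ) be a twice continuously differentiable solution of the generalized Maxwell–Bloch equation ∂_t((∂_t g)·g⁻¹) + c·∂_x((∂_t g)·g⁻¹) = [σ, g·τ(x)·g⁻¹] which is 2π-periodic in x (g(t, x+2π) = g(t,x)). Then the total energy t ↦ ∫₀^{2π} [ (1/2)·Tr(((∂_t g)·g⁻¹)²) + Tr(σ·g·τ(x)·g⁻¹) ] dx is constant in t. -/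
/-!
Write `P = g_t g⁻¹` and `Q = g τ g⁻¹`. Since `g_t = P g` and `(g⁻¹)_t = - g⁻¹ P`, one has
`Q_t = [P, Q]`, so the energy density `e = ½ Tr P² + Tr (σ Q)` satisfies
`e_t = Tr (P P_t) + Tr (σ [P, Q])`. Substituting `P_t = [σ, Q] - c P_x` and using cyclicity of the
trace, the commutator terms cancel and `e_t = - c Tr (P P_x) = - c ∂ₓ (½ Tr P²)`. The integral of
the right-hand side over a period vanishes.

This computation is `energy_const`, carried out in a normed algebra with a continuous tracial
functional. The theorem is the case of matrices with the `ℓ∞` operator norm; the passage between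
entrywise derivatives and derivatives in the normed algebra is `mdt_eq` and `mdx_eq`.
-/


open Matrix

open scoped Topology
open MeasureTheory

/-- Differentiation under the integral sign over a compact interval, when the partial derivative
is jointly continuous. -/
lemma hasDerivAt_intervalIntegral_of_continuous {F F' : ℝ → ℝ → ℂ} {a b : ℝ}
    (hF : ∀ t, Continuous (F t)) (hF' : Continuous fun p : ℝ × ℝ => F' p.1 p.2)
    (hd : ∀ t x, HasDerivAt (fun s => F s x) (F' t x) t) (t : ℝ) :
    HasDerivAt (fun s => ∫ x in a..b, F s x) (∫ x in a..b, F' t x) t := by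
  obtain ⟨C, hC⟩ := ((isCompact_closedBall t 1).prod
    (isCompact_uIcc (a := a) (b := b))).exists_bound_of_continuousOn hF'.continuousOn
  have hF't : Continuous (F' t) := hF'.comp (by fun_prop : Continuous fun x : ℝ => (t, x))
  refine (intervalIntegral.hasDerivAt_integral_of_dominated_loc_of_deriv_le
    (bound := fun _ => C) (Metric.closedBall_mem_nhds t one_pos)
    (Filter.Eventually.of_forall fun s => (hF s).aestronglyMeasurable)
    ((hF t).intervalIntegrable _ _) hF't.aestronglyMeasurable
    (Filter.Eventually.of_forall fun x hx s hs => ?_) intervalIntegrable_const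
    (Filter.Eventually.of_forall fun x _ s _ => hd s x)).2
  exact hC (s, x) ⟨hs, Set.uIoc_subset_uIcc hx⟩

/-- Energy conservation in a normed algebra `A` with a tracial functional `tr`. The function `h`
plays the role of `g⁻¹`: only `g_t = P g` and `h_t = - h P` are used. -/
lemma energy_const {A : Type*} [NormedRing A] [NormedAlgebra ℝ A]
    (tr : A →L[ℝ] ℂ) (htr : ∀ a b, tr (a * b) = tr (b * a))
    (c L : ℝ) (σ : A) (τ : ℝ → A) (hτ : Continuous τ) (g h P Pt Px : ℝ → ℝ → A)
    (cg : Continuous fun p : ℝ × ℝ => g p.1 p.2) (ch : Continuous fun p : ℝ × ℝ => h p.1 p.2)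
    (cP : Continuous fun p : ℝ × ℝ => P p.1 p.2) (cPx : Continuous fun p : ℝ × ℝ => Px p.1 p.2)
    (hgt : ∀ t x, HasDerivAt (fun s => g s x) (P t x * g t x) t)
    (hht : ∀ t x, HasDerivAt (fun s => h s x) (-(h t x * P t x)) t)
    (hPt : ∀ t x, HasDerivAt (fun s => P s x) (Pt t x) t)
    (hPx : ∀ t x, HasDerivAt (fun y => P t y) (Px t x) x)
    (hper : ∀ t, P t L = P t 0)
    (heq : ∀ t x, Pt t x + c • Px t x
      = σ * (g t x * τ x * h t x) - (g t x * τ x * h t x) * σ) (t₁ t₂ : ℝ) :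
    (∫ x in (0:ℝ)..L, ((1/2 : ℂ) * tr (P t₁ x * P t₁ x) + tr (σ * g t₁ x * τ x * h t₁ x)))
      = ∫ x in (0:ℝ)..L, ((1/2 : ℂ) * tr (P t₂ x * P t₂ x) + tr (σ * g t₂ x * τ x * h t₂ x)) := by
  have sl : ∀ {f : ℝ → ℝ → A} (_ : Continuous fun p : ℝ × ℝ => f p.1 p.2) (t : ℝ),
      Continuous (f t) := fun hf t =>
    hf.comp (by fun_prop : Continuous fun x : ℝ => (t, x))
  have key := hasDerivAt_intervalIntegral_of_continuous (a := 0) (b := L)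
    (F := fun t x => (1/2 : ℂ) * tr (P t x * P t x) + tr (σ * g t x * τ x * h t x))
    (F' := fun t x => -(c : ℂ) * tr (P t x * Px t x))
    (fun t => by
      have := sl cg t
      have := sl ch t
      have := sl cP t
      fun_prop)
    (by fun_prop)
    (fun t x => by
      have h1 := (tr.hasFDerivAt.comp_hasDerivAt t ((hPt t x).mul (hPt t x))).const_mul (1/2 : ℂ)
      have h2 := tr.hasFDerivAt.comp_hasDerivAt t
        ((((hgt t x).const_mul σ).mul_const (τ x)).mul (hht t x))
      refine (h1.add h2).congr_deriv ?_
      have e : Pt t x = σ * (g t x * τ x * h t x) - (g t x * τ x * h t x) * σ - c • Px t x :=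
        eq_sub_of_add_eq (heq t x)
      have q1 : tr (σ * (P t x * g t x) * τ x * h t x)
          = tr (P t x * ((g t x * τ x * h t x) * σ)) := by
        rw [← mul_assoc (P t x), ← htr σ]
        simp only [mul_assoc]
      have q2 : tr (σ * g t x * τ x * (h t x * P t x))
          = tr (P t x * (σ * (g t x * τ x * h t x))) := by
        rw [← htr _ (P t x)]
        simp only [mul_assoc]
      simp only [map_add, mul_neg, map_neg, htr (Pt t x), q1, q2]
      simp only [e, mul_sub, map_sub, mul_smul_comm, map_smul, Complex.real_smul]
      ring)
  have zero : ∀ t, (∫ x in (0:ℝ)..L, -(c : ℂ) * tr (P t x * Px t x)) = 0 := fun t => by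
    have d : ∀ x, HasDerivAt (fun y => (1/2 : ℂ) * tr (P t y * P t y)) (tr (P t x * Px t x)) x := by
      intro x
      refine ((tr.hasFDerivAt.comp_hasDerivAt x
        ((hPx t x).mul (hPx t x))).const_mul (1/2 : ℂ)).congr_deriv ?_
      simp only [map_add, htr (Px t x)]
      ring
    have ci : Continuous fun x => tr (P t x * Px t x) := by
      have := sl cP t
      have := sl cPx t
      fun_prop
    rw [intervalIntegral.integral_const_mul,
      intervalIntegral.integral_eq_sub_of_hasDerivAt (fun x _ => d x) (ci.intervalIntegrable _ _),
      hper t, sub_self, mul_zero]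
  exact is_const_of_deriv_eq_zero (fun t => (key t).differentiableAt)
    (fun t => (key t).deriv.trans (zero t)) t₁ t₂

section MatrixNorm

attribute [local instance] Matrix.linftyOpNormedRing Matrix.linftyOpNormedAlgebra

/-- The matrix entry `(i, j)` as a continuous linear functional. -/
noncomputable def entryCLM {n : ℕ} (i j : Fin n) : Matrix (Fin n) (Fin n) ℂ →L[ℝ] ℂ :=
  LinearMap.toContinuousLinearMap (Matrix.entryLinearMap ℝ ℂ i j)

/-- The trace as a continuous real-linear functional. -/
noncomputable def traceCLM (n : ℕ) : Matrix (Fin n) (Fin n) ℂ →L[ℝ] ℂ :=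
  LinearMap.toContinuousLinearMap (Matrix.traceLinearMap (Fin n) ℝ ℂ)

/-- The matrix unit inclusion `z ↦ z E_{ij}` as a continuous linear map. -/
noncomputable def singleCLM {n : ℕ} (i j : Fin n) : ℂ →L[ℝ] Matrix (Fin n) (Fin n) ℂ :=
  LinearMap.toContinuousLinearMap (Matrix.singleLinearMap ℝ i j)

lemma eq_sum_singleCLM {n : ℕ} (M : Matrix (Fin n) (Fin n) ℂ) :
    M = ∑ i, ∑ j, singleCLM i j (M i j) :=
  Matrix.matrix_eq_sum_single M

lemma mdt_eq {n : ℕ} {M : ℝ → ℝ → Matrix (Fin n) (Fin n) ℂ} {M' : Matrix (Fin n) (Fin n) ℂ}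
    {t x : ℝ} (h : HasDerivAt (fun s => M s x) M' t) : mdt M t x = M' := by
  ext i j
  exact ((entryCLM i j).hasFDerivAt.comp_hasDerivAt t h).deriv

lemma mdx_eq {n : ℕ} {M : ℝ → ℝ → Matrix (Fin n) (Fin n) ℂ} {M' : Matrix (Fin n) (Fin n) ℂ}
    {t x : ℝ} (h : HasDerivAt (fun y => M t y) M' x) : mdx M t x = M' := by
  ext i j
  exact ((entryCLM i j).hasFDerivAt.comp_hasDerivAt x h).deriv

/-- The `t`-derivative of a differentiable function of `(t, x)`, through its Fréchet derivative. -/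
lemma hasDerivAt_fst {E : Type*} [NormedAddCommGroup E] [NormedSpace ℝ E] {f : ℝ × ℝ → E}
    (hf : Differentiable ℝ f) (t x : ℝ) :
    HasDerivAt (fun s => f (s, x)) (fderiv ℝ f (t, x) (1, 0)) t :=
  (hf (t, x)).hasFDerivAt.comp_hasDerivAt t ((hasDerivAt_id t).prodMk (hasDerivAt_const t x))

lemma hasDerivAt_snd {E : Type*} [NormedAddCommGroup E] [NormedSpace ℝ E] {f : ℝ × ℝ → E}
    (hf : Differentiable ℝ f) (t x : ℝ) :
    HasDerivAt (fun y => f (t, y)) (fderiv ℝ f (t, x) (0, 1)) x :=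
  (hf (t, x)).hasFDerivAt.comp_hasDerivAt x ((hasDerivAt_const x t).prodMk (hasDerivAt_id x))

lemma energy_const_matrix {n : ℕ} (c : ℝ)
    (σ : Matrix (Fin n) (Fin n) ℂ)
    (τ : ℝ → Matrix (Fin n) (Fin n) ℂ)
    (hτ : ∀ i j, Continuous fun x => τ x i j)
    (g : ℝ → ℝ → Matrix (Fin n) (Fin n) ℂ)
    (hg : ∀ i j, ContDiff ℝ 2 fun p : ℝ × ℝ => g p.1 p.2 i j)
    (hginv : ∀ t x, IsUnit (g t x))
    (hgper : ∀ t x, g t (x + 2 * Real.pi) = g t x)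
    (hMBN : ∀ t x, mdt (fun t x => mdt g t x * (g t x)⁻¹) t x
        + (c : ℂ) • mdx (fun t x => mdt g t x * (g t x)⁻¹) t x
      = σ * (g t x * τ x * (g t x)⁻¹) - (g t x * τ x * (g t x)⁻¹) * σ) (t₁ t₂ : ℝ) :
      (∫ x in (0:ℝ)..(2 * Real.pi),
        ((1/2 : ℂ) * ((mdt g t₁ x * (g t₁ x)⁻¹) * (mdt g t₁ x * (g t₁ x)⁻¹)).trace
          + (σ * g t₁ x * τ x * (g t₁ x)⁻¹).trace))
      = ∫ x in (0:ℝ)..(2 * Real.pi),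
        ((1/2 : ℂ) * ((mdt g t₂ x * (g t₂ x)⁻¹) * (mdt g t₂ x * (g t₂ x)⁻¹)).trace
          + (σ * g t₂ x * τ x * (g t₂ x)⁻¹).trace) := by
  have cτ : Continuous τ := by
    rw [funext fun x => eq_sum_singleCLM (τ x)]
    exact continuous_finsetSum _ fun i _ => continuous_finsetSum _ fun j _ =>
      (singleCLM i j).continuous.comp (hτ i j)
  have G : ContDiff ℝ 2 fun p : ℝ × ℝ => g p.1 p.2 := by
    rw [funext fun p : ℝ × ℝ => eq_sum_singleCLM (g p.1 p.2)]
    exact ContDiff.sum fun i _ => ContDiff.sum fun j _ =>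
      (singleCLM i j).contDiff.comp (hg i j)
  have H : ContDiff ℝ 2 fun p : ℝ × ℝ => (g p.1 p.2)⁻¹ := by
    simp only [Matrix.nonsing_inv_eq_ringInverse]
    refine contDiff_iff_contDiffAt.2 fun p => ?_
    obtain ⟨u, hu⟩ := hginv p.1 p.2
    have := contDiffAt_ringInverse (n := 2) ℝ u
    rw [hu] at this
    exact this.comp p G.contDiffAt
  have det : ∀ t x, IsUnit (g t x).det := fun t x => (Matrix.isUnit_iff_isUnit_det _).1 (hginv t x)
  have dg := hasDerivAt_fst (G.differentiable two_ne_zero)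
  have dh := hasDerivAt_fst (H.differentiable two_ne_zero)
  have hmdt : ∀ t x, mdt g t x = fderiv ℝ (fun p : ℝ × ℝ => g p.1 p.2) (t, x) (1, 0) :=
    fun t x => mdt_eq (dg t x)
  have hP : ContDiff ℝ 1 fun p : ℝ × ℝ => mdt g p.1 p.2 * (g p.1 p.2)⁻¹ := by
    simp only [hmdt]
    exact ((G.fderiv_right (by norm_num)).clm_apply contDiff_const).mul (H.of_le (by norm_num))
  have dPt := hasDerivAt_fst (hP.differentiable one_ne_zero)
  have dPx := hasDerivAt_snd (hP.differentiable one_ne_zero)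
  have hgt : ∀ t x, HasDerivAt (fun s => g s x) (mdt g t x * (g t x)⁻¹ * g t x) t := fun t x => by
    rw [Matrix.nonsing_inv_mul_cancel_right _ _ (det t x), hmdt]
    exact dg t x
  refine energy_const (traceCLM n) (fun a b => Matrix.trace_mul_comm a b) c (2 * Real.pi) σ τ cτ
    g (fun t x => (g t x)⁻¹) (fun t x => mdt g t x * (g t x)⁻¹) _ _
    G.continuous H.continuous hP.continuous
    ((hP.continuous_fderiv one_ne_zero).clm_apply continuous_const) hgt (fun t x => ?_) dPt dPx
    (fun t => ?_) (fun t x => ?_) t₁ t₂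
  · -- differentiating `g g⁻¹ = 1` gives `(g⁻¹)_t = - g⁻¹ g_t g⁻¹`
    have e := ((hgt t x).mul (dh t x)).unique
      ((hasDerivAt_const t (1 : Matrix (Fin n) (Fin n) ℂ)).congr_of_eventuallyEq
        (Filter.Eventually.of_forall fun s => Matrix.mul_nonsing_inv _ (det s x)))
    refine (dh t x).congr_deriv ?_
    rw [Matrix.mul_assoc, Matrix.mul_nonsing_inv _ (det t x), Matrix.mul_one] at e
    have e' := congrArg (fun M => (g t x)⁻¹ * M) (eq_neg_of_add_eq_zero_right e)
    simpa only [Matrix.nonsing_inv_mul_cancel_left _ _ (det t x), Matrix.mul_neg] using e'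
  · have : ∀ s, g s (2 * Real.pi) = g s 0 := fun s => by simpa using hgper s 0
    simp only [mdt, this]
  · have := hMBN t x
    rw [mdt_eq (dPt t x), mdx_eq (dPx t x)] at this
    rw [← this]
    rfl

end MatrixNorm

theorem MBN_total_energy_conservation {n : ℕ} (c : ℝ)
    (σ : Matrix (Fin n) (Fin n) ℂ)
    (τ : ℝ → Matrix (Fin n) (Fin n) ℂ)
    (hτ : ∀ i j, Continuous fun x => τ x i j)
    (hτper : ∀ x, τ (x + 2 * Real.pi) = τ x)
    (g : ℝ → ℝ → Matrix (Fin n) (Fin n) ℂ)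
    (hg : ∀ i j, ContDiff ℝ 2 fun p : ℝ × ℝ => g p.1 p.2 i j)
    (hginv : ∀ t x, IsUnit (g t x))
    (hgper : ∀ t x, g t (x + 2 * Real.pi) = g t x)
    (hMBN : ∀ t x, mdt (fun t x => mdt g t x * (g t x)⁻¹) t x
        + (c : ℂ) • mdx (fun t x => mdt g t x * (g t x)⁻¹) t x
      = σ * (g t x * τ x * (g t x)⁻¹) - (g t x * τ x * (g t x)⁻¹) * σ) :
    ∀ t₁ t₂ : ℝ,
      (∫ x in (0:ℝ)..(2 * Real.pi),
        ((1/2 : ℂ) * ((mdt g t₁ x * (g t₁ x)⁻¹) * (mdt g t₁ x * (g t₁ x)⁻¹)).trace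
          + (σ * g t₁ x * τ x * (g t₁ x)⁻¹).trace))
      = ∫ x in (0:ℝ)..(2 * Real.pi),
        ((1/2 : ℂ) * ((mdt g t₂ x * (g t₂ x)⁻¹) * (mdt g t₂ x * (g t₂ x)⁻¹)).trace
          + (σ * g t₂ x * τ x * (g t₂ x)⁻¹).trace) := by
  exact energy_const_matrix c σ τ hτ g hg hginv hgper hMBN
end

section
/- Let c ∈ ℝ, σ ∈ M_n(ℂ) constant, τ : ℝ → M_n(ℂ) continuous, and let g : ℝ² → GL(n,ℂ) be twice continuously differentiable. Then g satisfies the generalized Maxwell–Bloch equation ∂_t((∂_t g)·g⁻¹) + c·∂_x((∂_t g)·g⁻¹) = [σ, g·τ(x)·g⁻¹] if and only if ∂_t( g⁻¹·(∂_t g) + c·g⁻¹·(∂_x g) ) = [g⁻¹·σ·g, τ(x)] holds on ℝ². -/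
/-!
Write `A = g_t g⁻¹`. The product rule together with `∂(g⁻¹) = -g⁻¹ (∂g) g⁻¹` and the symmetry
`g_tx = g_xt` of second derivatives (available since `g` is `C²`) gives
`∂_t (g⁻¹ g_t + c g⁻¹ g_x) = g⁻¹ (∂_t A + c ∂_x A) g`,
and conjugation also sends `[σ, g τ g⁻¹]` to `[g⁻¹ σ g, τ]`. Hence at every point the second
equation is the first one conjugated by the invertible matrix `g`.

Differentiation is handled through the entrywise predicate `HasMatDeriv`; the derivative of the
inverse comes from `hasFDerivAt_ringInverse` for a normed-ring structure on matrices.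
-/

open Matrix

/-- Entrywise differentiability of a curve of matrices at `t`, with the derivative given as a matrix. -/
def HasMatDeriv {n : ℕ} (F : ℝ → Matrix (Fin n) (Fin n) ℂ) (F' : Matrix (Fin n) (Fin n) ℂ)
    (t : ℝ) : Prop :=
  ∀ i j, HasDerivAt (fun s => F s i j) (F' i j) t

namespace HasMatDeriv

variable {n : ℕ} {F G : ℝ → Matrix (Fin n) (Fin n) ℂ} {F' G' : Matrix (Fin n) (Fin n) ℂ} {t : ℝ}

theorem add (hF : HasMatDeriv F F' t) (hG : HasMatDeriv G G' t) :
    HasMatDeriv (fun s => F s + G s) (F' + G') t :=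
  fun i j => (hF i j).add (hG i j)

theorem const_smul (c : ℂ) (hF : HasMatDeriv F F' t) :
    HasMatDeriv (fun s => c • F s) (c • F') t :=
  fun i j => (hF i j).const_mul c

theorem mul (hF : HasMatDeriv F F' t) (hG : HasMatDeriv G G' t) :
    HasMatDeriv (fun s => F s * G s) (F' * G t + F t * G') t := by
  intro i j
  simp only [Matrix.mul_apply, Matrix.add_apply, ← Finset.sum_add_distrib]
  exact HasDerivAt.fun_sum fun k _ => (hF i k).mul (hG k j)

attribute [local instance] Matrix.linftyOpNormedAddCommGroup Matrix.linftyOpNormedRing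
  Matrix.linftyOpNormedAlgebra Matrix.linftyOpNormedSpace

/-- Entrywise differentiability is differentiability for the operator norm: the coordinates are
continuous linear, and a matrix is the sum of its entries times the elementary matrices. -/
theorem iff_hasDerivAt : HasMatDeriv F F' t ↔ HasDerivAt F F' t := by
  constructor
  · intro h
    have key : ∀ M : Matrix (Fin n) (Fin n) ℂ,
        M = ∑ i, ∑ j, M i j • Matrix.single i j (1 : ℂ) := by
      intro M
      conv_lhs => rw [Matrix.matrix_eq_sum_single M]
      simp
    have h2 : HasDerivAt (fun s => ∑ i, ∑ j, F s i j • Matrix.single i j (1 : ℂ))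
        (∑ i, ∑ j, F' i j • Matrix.single i j (1 : ℂ)) t :=
      HasDerivAt.fun_sum fun i _ => HasDerivAt.fun_sum fun j _ => (h i j).smul_const _
    rw [← key] at h2
    simpa only [← key] using h2
  · intro h i j
    exact ((Matrix.entryLinearMap ℝ ℂ i j).toContinuousLinearMap.hasFDerivAt
      (x := F t)).comp_hasDerivAt t h

theorem inv (hF : HasMatDeriv F F' t) (hu : IsUnit (F t)) :
    HasMatDeriv (fun s => (F s)⁻¹) (-((F t)⁻¹ * F' * (F t)⁻¹)) t := by
  rw [iff_hasDerivAt] at hF ⊢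
  obtain ⟨u, hu⟩ := hu
  have h := hasFDerivAt_ringInverse (𝕜 := ℝ) u
  rw [hu] at h
  have h2 := h.comp_hasDerivAt t hF
  have e : (↑u⁻¹ : Matrix (Fin n) (Fin n) ℂ) = (F t)⁻¹ := by
    rw [← hu, Matrix.coe_units_inv]
  simp only [e] at h2
  refine h2.congr_of_eventuallyEq (Filter.Eventually.of_forall fun s => ?_)
  exact Matrix.nonsing_inv_eq_ringInverse _

theorem mdt_eq {M : ℝ → ℝ → Matrix (Fin n) (Fin n) ℂ} {x : ℝ}
    (h : HasMatDeriv (fun s => M s x) F' t) : mdt M t x = F' := by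
  ext i j
  exact (h i j).deriv

theorem mdx_eq {M : ℝ → ℝ → Matrix (Fin n) (Fin n) ℂ} {x : ℝ}
    (h : HasMatDeriv (fun s => M t s) F' x) : mdx M t x = F' := by
  ext i j
  exact (h i j).deriv

end HasMatDeriv

theorem hasDerivAt_comp_fst {E : Type*} [NormedAddCommGroup E] [NormedSpace ℝ E]
    {f : ℝ × ℝ → E} {t x : ℝ} (hf : DifferentiableAt ℝ f (t, x)) :
    HasDerivAt (fun s => f (s, x)) (fderiv ℝ f (t, x) (1, 0)) t :=
  hf.hasFDerivAt.comp_hasDerivAt t ((hasDerivAt_id t).prodMk (hasDerivAt_const t x))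

theorem hasDerivAt_comp_snd {E : Type*} [NormedAddCommGroup E] [NormedSpace ℝ E]
    {f : ℝ × ℝ → E} {t x : ℝ} (hf : DifferentiableAt ℝ f (t, x)) :
    HasDerivAt (fun s => f (t, s)) (fderiv ℝ f (t, x) (0, 1)) x :=
  hf.hasFDerivAt.comp_hasDerivAt x ((hasDerivAt_const x t).prodMk (hasDerivAt_id x))

/-- First and second partial derivatives of a `C²` matrix function at a point; the same matrix
`gtx` serves as `∂_x ∂_t g` and as `∂_t ∂_x g`. -/
theorem exists_matDeriv {n : ℕ} (g : ℝ → ℝ → Matrix (Fin n) (Fin n) ℂ)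
    (hg : ∀ i j, ContDiff ℝ 2 fun p : ℝ × ℝ => g p.1 p.2 i j) (t x : ℝ) :
    HasMatDeriv (fun s => g s x) (mdt g t x) t ∧ HasMatDeriv (fun s => g t s) (mdx g t x) x ∧
    ∃ gtt gtx, HasMatDeriv (fun s => mdt g s x) gtt t ∧
      HasMatDeriv (fun s => mdt g t s) gtx x ∧ HasMatDeriv (fun s => mdx g s x) gtx t := by
  have hd : ∀ i j p, DifferentiableAt ℝ (fun p : ℝ × ℝ => g p.1 p.2 i j) p :=
    fun i j p => (hg i j).differentiable (by norm_num) p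
  have hd2 : ∀ i j p, DifferentiableAt ℝ (fderiv ℝ (fun p : ℝ × ℝ => g p.1 p.2 i j)) p :=
    fun i j p => ((hg i j).fderiv_right (m := 1) (by norm_num)).differentiable (by norm_num) p
  have et : ∀ a b i j, mdt g a b i j = fderiv ℝ (fun p : ℝ × ℝ => g p.1 p.2 i j) (a, b) (1, 0) :=
    fun a b i j => (hasDerivAt_comp_fst (hd i j (a, b))).deriv
  have ex : ∀ a b i j, mdx g a b i j = fderiv ℝ (fun p : ℝ × ℝ => g p.1 p.2 i j) (a, b) (0, 1) :=
    fun a b i j => (hasDerivAt_comp_snd (hd i j (a, b))).deriv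
  refine ⟨fun i j => ?_, fun i j => ?_,
    Matrix.of fun i j =>
      fderiv ℝ (fderiv ℝ (fun p : ℝ × ℝ => g p.1 p.2 i j)) (t, x) (1, 0) (1, 0),
    Matrix.of fun i j =>
      fderiv ℝ (fderiv ℝ (fun p : ℝ × ℝ => g p.1 p.2 i j)) (t, x) (0, 1) (1, 0),
    fun i j => ?_, fun i j => ?_, fun i j => ?_⟩
  · rw [et]
    exact hasDerivAt_comp_fst (hd i j (t, x))
  · rw [ex]
    exact hasDerivAt_comp_snd (hd i j (t, x))
  · simp only [et, Matrix.of_apply]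
    simpa using (hasDerivAt_comp_fst (hd2 i j (t, x))).clm_apply
      (hasDerivAt_const t ((1 : ℝ), (0 : ℝ)))
  · simp only [et, Matrix.of_apply]
    simpa using (hasDerivAt_comp_snd (hd2 i j (t, x))).clm_apply
      (hasDerivAt_const x ((1 : ℝ), (0 : ℝ)))
  · have hs : IsSymmSndFDerivAt ℝ (fun p : ℝ × ℝ => g p.1 p.2 i j) (t, x) :=
      (hg i j).contDiffAt.isSymmSndFDerivAt (by simp)
    simp only [ex, Matrix.of_apply]
    rw [hs.eq (0, 1) (1, 0)]
    simpa using (hasDerivAt_comp_fst (hd2 i j (t, x))).clm_apply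
      (hasDerivAt_const t ((0 : ℝ), (1 : ℝ)))

theorem MBN_left_right_form_equivalence {n : ℕ} (c : ℝ)
    (σ : Matrix (Fin n) (Fin n) ℂ)
    (τ : ℝ → Matrix (Fin n) (Fin n) ℂ)
    (hτ : ∀ i j, Continuous fun x => τ x i j)
    (g : ℝ → ℝ → Matrix (Fin n) (Fin n) ℂ)
    (hg : ∀ i j, ContDiff ℝ 2 fun p : ℝ × ℝ => g p.1 p.2 i j)
    (hginv : ∀ t x, IsUnit (g t x)) :
    (∀ t x, mdt (fun t x => mdt g t x * (g t x)⁻¹) t x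
        + (c : ℂ) • mdx (fun t x => mdt g t x * (g t x)⁻¹) t x
      = σ * (g t x * τ x * (g t x)⁻¹) - (g t x * τ x * (g t x)⁻¹) * σ)
    ↔
    (∀ t x, mdt (fun t x => (g t x)⁻¹ * mdt g t x + (c : ℂ) • ((g t x)⁻¹ * mdx g t x)) t x
      = ((g t x)⁻¹ * σ * g t x) * τ x - τ x * ((g t x)⁻¹ * σ * g t x)) := by
  refine forall_congr' fun t => forall_congr' fun x => ?_
  obtain ⟨ht, hx, gtt, gtx, htt, htx, hxt⟩ := exists_matDeriv g hg t x
  have hu := hginv t x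
  have hit := ht.inv hu
  have hix := hx.inv hu
  have e1 : mdt (fun t x => mdt g t x * (g t x)⁻¹) t x = _ :=
    HasMatDeriv.mdt_eq (htt.mul hit)
  have e2 : mdx (fun t x => mdt g t x * (g t x)⁻¹) t x = _ :=
    HasMatDeriv.mdx_eq (htx.mul hix)
  have e3 : mdt (fun t x => (g t x)⁻¹ * mdt g t x + (c : ℂ) • ((g t x)⁻¹ * mdx g t x)) t x = _ :=
    HasMatDeriv.mdt_eq ((hit.mul htt).add ((hit.mul hxt).const_smul (c : ℂ)))
  rw [e1, e2, e3]
  have hdet := (Matrix.isUnit_iff_isUnit_det _).1 hu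
  have hl : (g t x)⁻¹ * g t x = 1 := Matrix.nonsing_inv_mul _ hdet
  have hr : g t x * (g t x)⁻¹ = 1 := Matrix.mul_nonsing_inv _ hdet
  generalize mdt g t x = gt at *
  generalize mdx g t x = gx at *
  generalize (g t x)⁻¹ = k at *
  generalize g t x = h at *
  generalize τ x = T at *
  have hl' : ∀ B, k * (h * B) = B := fun B => by rw [← mul_assoc, hl, one_mul]
  have hr' : ∀ B, h * (k * B) = B := fun B => by rw [← mul_assoc, hr, one_mul]
  constructor
  · intro H
    have H2 := congrArg (fun B => k * B * h) H
    simp only [mul_add, add_mul, mul_sub, sub_mul, mul_neg, neg_mul, Matrix.mul_smul,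
      Matrix.smul_mul, mul_assoc, hl, hl', mul_one, smul_add, smul_neg] at H2 ⊢
    rw [← H2]
    abel
  · intro H
    have H2 := congrArg (fun B => h * B * k) H
    simp only [mul_add, add_mul, mul_sub, sub_mul, mul_neg, neg_mul, Matrix.mul_smul,
      Matrix.smul_mul, mul_assoc, hr, hr', mul_one, smul_add, smul_neg] at H2 ⊢
    rw [← H2]
    abel
end

section
/- Let c ∈ ℝ, σ ∈ M_n(ℂ) constant, τ : ℝ → M_n(ℂ) continuous and 2π-periodic, and let g : ℝ² → GL(n,ℂ) be a twice continuously differentiable solution of the generalized Maxwell–Bloch equation ∂_t((∂_t g)·g⁻¹) + c·∂_x((∂_t g)·g⁻¹) = [σ, g·τ(x)·g⁻¹], 2π-periodic in x. Let η ∈ M_n(ℂ) be a constant matrix with η·σ = σ·η. Then the quantity t ↦ ∫₀^{2π} Tr( (∂_t g)(t,x)·g(t,x)⁻¹ · η ) dx is constant in t. (This is the conserved quantity associated with the left action of the torus centralizing σ.) -/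
/-!
Write `A = (∂_t g) g⁻¹`. Pairing the equation with `η` under the trace kills the right-hand side,
since `Tr([σ, P] η) = Tr(P [η, σ]) = 0` for every `P` when `η` commutes with `σ`. Hence
`F = Tr(A η)` satisfies the free transport equation `∂_t F + c ∂_x F = 0`; as `F` is `C¹`, it is
constant along the characteristics `s ↦ (s, x + c s)`. The profile of `F` at time `t₂` is therefore
a translate of the profile at time `t₁`, and the integrals of a periodic function and of its
translate over a period agree. No differentiation under the integral sign is needed.
-/

open Matrix

/-- The determinant of a matrix with `C^k` entries is `C^k`. -/
lemma contDiff_det_of_entries {n : ℕ} {k : WithTop ℕ∞} {M : ℝ × ℝ → Matrix (Fin n) (Fin n) ℂ}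
    (h : ∀ i j, ContDiff ℝ k fun p => M p i j) : ContDiff ℝ k fun p => (M p).det := by
  simp only [Matrix.det_apply]
  refine ContDiff.sum fun s _ => ContDiff.const_smul _ ?_
  exact contDiff_prod fun i _ => h _ _

/-- The inverse of an invertible matrix with `C^k` entries has `C^k` entries, by Cramer's rule. -/
lemma contDiff_inv_of_entries {n : ℕ} {k : WithTop ℕ∞} {M : ℝ × ℝ → Matrix (Fin n) (Fin n) ℂ}
    (h : ∀ i j, ContDiff ℝ k fun p => M p i j) (hu : ∀ p, IsUnit (M p)) (i j : Fin n) :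
    ContDiff ℝ k fun p => (M p)⁻¹ i j := by
  have hne : ∀ p, (M p).det ≠ 0 := fun p =>
    ((Matrix.isUnit_iff_isUnit_det _).1 (hu p)).ne_zero
  simp only [Matrix.inv_def, Matrix.smul_apply, smul_eq_mul, Ring.inverse_eq_inv',
    Matrix.adjugate_apply]
  refine ((contDiff_det_of_entries h).inv hne).mul (contDiff_det_of_entries fun a b => ?_)
  by_cases hb : a = j
  · subst hb
    simpa using contDiff_const
  · simpa [Matrix.updateRow_ne hb] using h a b

/-- The partial `t`-derivative of a `C²` function of two real variables is `C¹`. -/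
lemma contDiff_partial_fst {f : ℝ → ℝ → ℂ} (h : ContDiff ℝ 2 fun p : ℝ × ℝ => f p.1 p.2) :
    ContDiff ℝ 1 fun p : ℝ × ℝ => deriv (fun s => f s p.2) p.1 := by
  have e : (fun p : ℝ × ℝ => deriv (fun s => f s p.2) p.1)
      = fun p => fderiv ℝ (fun p : ℝ × ℝ => f p.1 p.2) p (1, 0) := by
    funext p
    have h1 : HasFDerivAt (fun p : ℝ × ℝ => f p.1 p.2)
        (fderiv ℝ (fun p : ℝ × ℝ => f p.1 p.2) p) (p.1, p.2) :=
      (h.differentiable (by norm_num) p).hasFDerivAt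
    exact (h1.comp_hasDerivAt p.1 ((hasDerivAt_id p.1).prodMk (hasDerivAt_const p.1 p.2))).deriv
  rw [e]
  exact (h.fderiv_right (m := 1) (by norm_num)).clm_apply contDiff_const

/-- Derivative of a `C¹` function along the characteristic line `s ↦ (s, x + c s)`. -/
lemma hasDerivAt_characteristic {f : ℝ → ℝ → ℂ} (h : ContDiff ℝ 1 fun p : ℝ × ℝ => f p.1 p.2)
    (c x t : ℝ) :
    HasDerivAt (fun s => f s (x + c * s))
      (deriv (fun s => f s (x + c * t)) t + (c : ℂ) * deriv (fun y => f t y) (x + c * t)) t := by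
  have h1 : HasFDerivAt (fun p : ℝ × ℝ => f p.1 p.2)
      (fderiv ℝ (fun p : ℝ × ℝ => f p.1 p.2) (t, x + c * t)) (t, x + c * t) :=
    (h.differentiable (by norm_num) _).hasFDerivAt
  have ht := (h1.comp_hasDerivAt t
    ((hasDerivAt_id t).prodMk (hasDerivAt_const t (x + c * t)))).deriv
  have hx := (h1.comp_hasDerivAt (x + c * t)
    ((hasDerivAt_const (x + c * t) t).prodMk (hasDerivAt_id (x + c * t)))).deriv
  have hline : HasDerivAt (fun s : ℝ => x + c * s) c t := by
    simpa using ((hasDerivAt_id t).const_mul c).const_add x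
  have hc := h1.comp_hasDerivAt t ((hasDerivAt_id t).prodMk hline)
  have hv : ((1 : ℝ), c) = (1, 0) + c • ((0 : ℝ), (1 : ℝ)) := by simp
  rw [hv, map_add, map_smul, ← ht, ← hx] at hc
  simpa [Function.comp_def] using hc

theorem MBN_left_torus_conservation {n : ℕ} (c : ℝ)
    (σ : Matrix (Fin n) (Fin n) ℂ)
    (τ : ℝ → Matrix (Fin n) (Fin n) ℂ)
    (hτ : ∀ i j, Continuous fun x => τ x i j)
    (hτper : ∀ x, τ (x + 2 * Real.pi) = τ x)
    (g : ℝ → ℝ → Matrix (Fin n) (Fin n) ℂ)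
    (hg : ∀ i j, ContDiff ℝ 2 fun p : ℝ × ℝ => g p.1 p.2 i j)
    (hginv : ∀ t x, IsUnit (g t x))
    (hgper : ∀ t x, g t (x + 2 * Real.pi) = g t x)
    (hMBN : ∀ t x, mdt (fun t x => mdt g t x * (g t x)⁻¹) t x
        + (c : ℂ) • mdx (fun t x => mdt g t x * (g t x)⁻¹) t x
      = σ * (g t x * τ x * (g t x)⁻¹) - (g t x * τ x * (g t x)⁻¹) * σ)
    (η : Matrix (Fin n) (Fin n) ℂ) (hη : η * σ = σ * η) :
    ∀ t₁ t₂ : ℝ,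
      (∫ x in (0:ℝ)..(2 * Real.pi), ((mdt g t₁ x * (g t₁ x)⁻¹) * η).trace)
      = ∫ x in (0:ℝ)..(2 * Real.pi), ((mdt g t₂ x * (g t₂ x)⁻¹) * η).trace := by
  intro t₁ t₂
  set A : ℝ → ℝ → Matrix (Fin n) (Fin n) ℂ := fun t x => mdt g t x * (g t x)⁻¹ with hA
  have hAC : ∀ i j, ContDiff ℝ 1 fun p : ℝ × ℝ => A p.1 p.2 i j := by
    intro i j
    simp only [hA, Matrix.mul_apply]
    refine ContDiff.sum fun k _ => ContDiff.mul ?_ ?_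
    · exact contDiff_partial_fst (f := fun t x => g t x i k) (hg i k)
    · exact contDiff_inv_of_entries (M := fun p : ℝ × ℝ => g p.1 p.2)
        (fun a b => (hg a b).of_le (by norm_num)) (fun p => hginv _ _) k j
  set F : ℝ → ℝ → ℂ := fun t x => (A t x * η).trace with hF
  have hzero : ∀ x t, HasDerivAt (fun s => F s (x + c * s)) 0 t := by
    intro x t
    have h1 : HasDerivAt (fun s => F s (x + c * s))
        (((mdt A t (x + c * t) + (c : ℂ) • mdx A t (x + c * t)) * η).trace) t := by
      simp only [hF, Matrix.trace, Matrix.diag_apply, Matrix.mul_apply]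
      refine HasDerivAt.fun_sum fun i _ => HasDerivAt.fun_sum fun j _ => ?_
      exact (hasDerivAt_characteristic (f := fun t x => A t x i j) (hAC i j) c x t).mul_const _
    rw [hMBN, sub_mul, Matrix.trace_sub] at h1
    have h2 : ∀ P : Matrix (Fin n) (Fin n) ℂ, (σ * P * η).trace - (P * σ * η).trace = 0 := by
      intro P
      rw [Matrix.trace_mul_cycle, hη, Matrix.trace_mul_comm, ← Matrix.mul_assoc, sub_self]
    rwa [h2] at h1
  have hconst : ∀ x, F t₁ (x + c * t₁) = F t₂ (x + c * t₂) := fun x =>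
    is_const_of_deriv_eq_zero (fun t => (hzero x t).differentiableAt)
      (fun t => (hzero x t).deriv) t₁ t₂
  have hper : Function.Periodic (F t₂) (2 * Real.pi) := by
    intro x
    simp only [hF, hA, mdt, hgper]
  have hshift : ∀ x, F t₁ x = F t₂ (x + c * (t₂ - t₁)) := by
    intro x
    have h := hconst (x - c * t₁)
    rw [sub_add_cancel] at h
    rw [h]
    congr 1
    ring
  change (∫ x in (0:ℝ)..(2 * Real.pi), F t₁ x) = ∫ x in (0:ℝ)..(2 * Real.pi), F t₂ x
  simp only [hshift]
  rw [intervalIntegral.integral_comp_add_right (F t₂)]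
  have h := hper.intervalIntegral_add_eq (c * (t₂ - t₁)) 0
  rw [zero_add] at h ⊢
  rwa [add_comm (2 * Real.pi)]
end

section
/- Let c ∈ ℝ, σ ∈ M_n(ℂ) constant, τ : ℝ → M_n(ℂ) continuously differentiable (depending only on x), and let g : ℝ² → GL(n,ℂ) be twice continuously differentiable. Write u = (∂_t g)·g⁻¹ and m = g·τ(x)·g⁻¹, and for z ∈ ℂ, z ≠ 0, define U = z·σ − u and V = −z·σ + u − z⁻¹·m. Then ∂_t V − c·∂_x U + [U, V] = ∂_t u + c·∂_x u − [σ, m] for every z ≠ 0; consequently, g satisfies the generalized Maxwell–Bloch equation ∂_t((∂_t g)·g⁻¹) + c·∂_x((∂_t g)·g⁻¹) = [σ, g·τ(x)·g⁻¹] if and only if the zero-curvature equation ∂_t V − c·∂_x U + [U, V] = 0 holds for all z ≠ 0. -/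
/-!
Since `U + V = -z⁻¹ m`, the commutator is `[U, V] = -z⁻¹ [U, m] = -[σ, m] + z⁻¹ [u, m]`, while
`∂_t V = ∂_t u - z⁻¹ ∂_t m`. So the identity reduces to `∂_t m = [u, m]` (`mdt_conj`): as `τ` does
not depend on `t`, this follows by differentiating `m g = g τ` in `t` and cancelling the invertible
factor `g`. The equivalence is then the identity read at `z ≠ 0` (the right-hand side is free of
`z`, so a single value such as `z = 1` suffices for the converse).

The entrywise derivatives split over sums only where the entries of `u` and `m` are differentiable
in `t`; this is where the smoothness of `g` and of its inverse (`differentiable_inv_entry`) enters.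
-/

open Matrix

theorem differentiable_det_of_entries {n : ℕ} {A : ℝ → Matrix (Fin n) (Fin n) ℂ}
    (hA : ∀ i j, Differentiable ℝ fun s => A s i j) : Differentiable ℝ fun s => (A s).det := by
  simp only [Matrix.det_apply']
  fun_prop

theorem differentiable_mul_entry {n : ℕ} {A B : ℝ → Matrix (Fin n) (Fin n) ℂ}
    (hA : ∀ i j, Differentiable ℝ fun s => A s i j)
    (hB : ∀ i j, Differentiable ℝ fun s => B s i j) (i j : Fin n) :
    Differentiable ℝ fun s => (A s * B s) i j := by
  simp only [Matrix.mul_apply]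
  fun_prop

/-- By Cramer's rule, the entries of the inverse are quotients of determinants. -/
theorem differentiable_inv_entry {n : ℕ} {A : ℝ → Matrix (Fin n) (Fin n) ℂ}
    (hA : ∀ i j, Differentiable ℝ fun s => A s i j) (hinv : ∀ s, IsUnit (A s)) (i j : Fin n) :
    Differentiable ℝ fun s => (A s)⁻¹ i j := by
  simp only [Matrix.inv_def, Matrix.smul_apply, smul_eq_mul, Ring.inverse_eq_inv',
    Matrix.adjugate_apply]
  refine Differentiable.mul ?_ ?_
  · exact (differentiable_det_of_entries hA).inv
      fun s => ((Matrix.isUnit_iff_isUnit_det _).1 (hinv s)).ne_zero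
  · refine differentiable_det_of_entries fun k l => ?_
    by_cases hk : k = j
    · subst hk
      simp
    · simpa [Matrix.updateRow_ne hk] using hA k l

theorem mdt_mul {n : ℕ} {A B : ℝ → ℝ → Matrix (Fin n) (Fin n) ℂ} {x : ℝ}
    (hA : ∀ i j, Differentiable ℝ fun s => A s x i j)
    (hB : ∀ i j, Differentiable ℝ fun s => B s x i j) (t : ℝ) :
    mdt (fun s y => A s y * B s y) t x = mdt A t x * B t x + A t x * mdt B t x := by
  ext i j
  simp only [mdt, Matrix.of_apply, Matrix.add_apply, Matrix.mul_apply]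
  rw [deriv_fun_sum fun k _ => ((hA i k).fun_mul (hB k j)) t, ← Finset.sum_add_distrib]
  exact Finset.sum_congr rfl fun k _ => deriv_fun_mul (hA i k t) (hB k j t)

/-- The evolution `∂_t m = [u, m]` of a conjugate `m = g τ g⁻¹` with `τ` independent of `t`, where
`u = (∂_t g) g⁻¹`. -/
theorem mdt_conj {n : ℕ} {g m : ℝ → ℝ → Matrix (Fin n) (Fin n) ℂ}
    {τ : ℝ → Matrix (Fin n) (Fin n) ℂ} {x : ℝ}
    (hg : ∀ i j, Differentiable ℝ fun s => g s x i j)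
    (hmd : ∀ i j, Differentiable ℝ fun s => m s x i j)
    (hginv : ∀ t x, IsUnit (g t x))
    (hm : ∀ t x, m t x = g t x * τ x * (g t x)⁻¹) (t : ℝ) :
    mdt m t x = (mdt g t x * (g t x)⁻¹) * m t x - m t x * (mdt g t x * (g t x)⁻¹) := by
  have hdet : ∀ s y, IsUnit (g s y).det := fun s y => (Matrix.isUnit_iff_isUnit_det _).1 (hginv s y)
  have hmg : (fun s y => m s y * g s y) = fun s y => g s y * τ y := by
    funext s y
    rw [hm, Matrix.mul_assoc, Matrix.nonsing_inv_mul _ (hdet s y), Matrix.mul_one]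
  have h1 := mdt_mul hmd hg t
  have h2 := mdt_mul (B := fun _ y => τ y) hg (fun i j => differentiable_const (τ x i j)) t
  have hτ0 : mdt (fun _ y => τ y) t x = 0 := by
    ext i j
    simp [mdt]
  rw [hmg, h2, hτ0, Matrix.mul_zero, add_zero] at h1
  have h3 : mdt m t x * g t x = mdt g t x * τ x - m t x * mdt g t x := by
    rw [h1, add_sub_cancel_right]
  calc mdt m t x = mdt m t x * g t x * (g t x)⁻¹ := by
        rw [Matrix.mul_assoc, Matrix.mul_nonsing_inv _ (hdet t x), Matrix.mul_one]
    _ = mdt g t x * τ x * (g t x)⁻¹ - m t x * (mdt g t x * (g t x)⁻¹) := by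
        rw [h3, Matrix.sub_mul, Matrix.mul_assoc (m t x)]
    _ = _ := by
        congr 1
        rw [hm, Matrix.mul_assoc (mdt g t x) (g t x)⁻¹, Matrix.mul_assoc (g t x) (τ x),
          ← Matrix.mul_assoc (g t x)⁻¹, Matrix.nonsing_inv_mul _ (hdet t x), Matrix.one_mul,
          Matrix.mul_assoc]

theorem MBN_zero_curvature_Lax_pair {n : ℕ} (c : ℝ)
    (σ : Matrix (Fin n) (Fin n) ℂ)
    (τ : ℝ → Matrix (Fin n) (Fin n) ℂ)
    (hτ : ∀ i j, ContDiff ℝ 1 fun x => τ x i j)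
    (g : ℝ → ℝ → Matrix (Fin n) (Fin n) ℂ)
    (hg : ∀ i j, ContDiff ℝ 2 fun p : ℝ × ℝ => g p.1 p.2 i j)
    (hginv : ∀ t x, IsUnit (g t x))
    (u m : ℝ → ℝ → Matrix (Fin n) (Fin n) ℂ)
    (hu : ∀ t x, u t x = mdt g t x * (g t x)⁻¹)
    (hm : ∀ t x, m t x = g t x * τ x * (g t x)⁻¹)
    (U V : ℂ → ℝ → ℝ → Matrix (Fin n) (Fin n) ℂ)
    (hU : ∀ z t x, U z t x = z • σ - u t x)
    (hV : ∀ z t x, V z t x = -(z • σ) + u t x - z⁻¹ • m t x) :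
    (∀ z : ℂ, z ≠ 0 → ∀ t x,
      mdt (V z) t x - (c : ℂ) • mdx (U z) t x
          + (U z t x * V z t x - V z t x * U z t x)
        = mdt u t x + (c : ℂ) • mdx u t x - (σ * m t x - m t x * σ)) ∧
    ((∀ t x, mdt u t x + (c : ℂ) • mdx u t x = σ * m t x - m t x * σ)
      ↔
     (∀ z : ℂ, z ≠ 0 → ∀ t x,
        mdt (V z) t x - (c : ℂ) • mdx (U z) t x
          + (U z t x * V z t x - V z t x * U z t x) = 0)) := by
  have hgt : ∀ x i j, ContDiff ℝ 2 fun s => g s x i j := fun x i j =>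
    (hg i j).comp (contDiff_id.prodMk contDiff_const)
  have hgd : ∀ x i j, Differentiable ℝ fun s => g s x i j := fun x i j =>
    (hgt x i j).differentiable (by norm_num)
  have hgtd : ∀ x i j, Differentiable ℝ fun s => mdt g s x i j := fun x i j =>
    (ContDiff.deriv' (n := 1) (hgt x i j)).differentiable (by norm_num)
  have hid : ∀ x i j, Differentiable ℝ fun s => (g s x)⁻¹ i j := fun x =>
    differentiable_inv_entry (hgd x) fun s => hginv s x
  have hud : ∀ x i j, Differentiable ℝ fun s => u s x i j := fun x i j => by
    simp only [hu]
    exact differentiable_mul_entry (hgtd x) (hid x) i j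
  have hmd : ∀ x i j, Differentiable ℝ fun s => m s x i j := fun x i j => by
    simp only [hm]
    exact differentiable_mul_entry
      (differentiable_mul_entry (hgd x) fun i j => differentiable_const (τ x i j)) (hid x) i j
  have key : ∀ z : ℂ, z ≠ 0 → ∀ t x,
      mdt (V z) t x - (c : ℂ) • mdx (U z) t x
          + (U z t x * V z t x - V z t x * U z t x)
        = mdt u t x + (c : ℂ) • mdx u t x - (σ * m t x - m t x * σ) := by
    intro z hz t x
    have hVt : mdt (V z) t x = mdt u t x - z⁻¹ • mdt m t x := by
      ext i j
      simp only [mdt, hV, Matrix.of_apply, Matrix.sub_apply, Matrix.add_apply, Matrix.smul_apply,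
        Matrix.neg_apply, smul_eq_mul]
      rw [deriv_fun_sub ((hud x i j t).const_add _) ((hmd x i j t).const_mul _), deriv_const_add,
        deriv_const_mul _ (hmd x i j t)]
    have hUx : mdx (U z) t x = -mdx u t x := by
      ext i j
      simp only [mdx, hU, Matrix.of_apply, Matrix.sub_apply, Matrix.neg_apply]
      rw [deriv_const_sub]
    have hmt : mdt m t x = u t x * m t x - m t x * u t x := by
      rw [hu]
      exact mdt_conj (hgd x) (hmd x) hginv hm t
    rw [hVt, hUx, hmt, hU, hV]
    simp only [Matrix.mul_sub, Matrix.sub_mul, Matrix.mul_add, Matrix.add_mul, Matrix.mul_neg,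
      Matrix.neg_mul, Matrix.mul_smul, Matrix.smul_mul, smul_sub, smul_add, smul_neg,
      smul_smul,
      inv_mul_cancel₀ hz, mul_inv_cancel₀ hz, one_smul]
    abel
  refine ⟨key, fun h z hz t x => ?_, fun h t x => ?_⟩
  · rw [key z hz, h, sub_self]
  · exact sub_eq_zero.1 ((key 1 one_ne_zero t x).symm.trans (h 1 one_ne_zero t x))
end
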